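/- Let 1 < p < q < p*. For every open ball B ⊂ ℝ^N, the supremum of μ_{p,q}(Ω) over all open bounded convex sets Ω ⊂ ℝ^N with diam(Ω) = diam(B) is strictly less than λ_{p,q}(B); equivalently, there is no sequence of open bounded convex sets Ω_n with diam(Ω_n) = diam(B) and μ_{p,q}(Ω_n) → λ_{p,q}(B), so for q > p the upper bound μ_{p,q}(Ω) < λ_{p,q}(B)(diam(B)/diam(Ω))^{p+Np/q−N} is not sharp. -/

import Mathlib

open MeasureTheory Metric Set Real

noncomputable section

/-- The Rayleigh quotient `(∫_Ω |∇v|^p) / (∫_Ω |v|^q)^(p/q)`, where the gradient is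
understood as the (a.e. defined) Fréchet derivative. -/
def rayleighQuot {N : ℕ} (p q : ℝ) (Ω : Set (EuclideanSpace ℝ (Fin N)))
    (v : EuclideanSpace ℝ (Fin N) → ℝ) : ℝ :=
  (∫ x in Ω, ‖fderiv ℝ v x‖ ^ p) / (∫ x in Ω, |v x| ^ q) ^ (p / q)

/-- The first (generalized) Dirichlet eigenvalue `λ_{p,q}(Ω)`: infimum of the Rayleigh
quotient over nontrivial smooth functions compactly supported in `Ω`. -/
def lambdaPQ {N : ℕ} (p q : ℝ) (Ω : Set (EuclideanSpace ℝ (Fin N))) : ℝ :=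
  sInf { R : ℝ | ∃ v : EuclideanSpace ℝ (Fin N) → ℝ,
    ContDiff ℝ (⊤ : ℕ∞) v ∧ HasCompactSupport v ∧ tsupport v ⊆ Ω ∧
    (∃ x ∈ Ω, v x ≠ 0) ∧ R = rayleighQuot p q Ω v }

/-- The first nontrivial (generalized) Neumann eigenvalue `μ_{p,q}(Ω)`: infimum of the
Rayleigh quotient over nontrivial Lipschitz functions on the closure of `Ω` satisfying
the constraint `∫_Ω |v|^(q-2) v = 0`. -/
def muPQ {N : ℕ} (p q : ℝ) (Ω : Set (EuclideanSpace ℝ (Fin N))) : ℝ :=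
  sInf { R : ℝ | ∃ v : EuclideanSpace ℝ (Fin N) → ℝ, ∃ K : NNReal,
    LipschitzOnWith K v (closure Ω) ∧ (∃ x ∈ Ω, v x ≠ 0) ∧
    (∫ x in Ω, |v x| ^ (q - 2) * v x) = 0 ∧ R = rayleighQuot p q Ω v }

/-- `q` is below the critical Sobolev exponent `p* = Np/(N-p)` (with `p* = ∞` if `p ≥ N`). -/
def ltCritical (N : ℕ) (p q : ℝ) : Prop := p < N → q < N * p / (N - p)

end

section Aux

open scoped ENNReal NNReal Pointwise

lemma aux_bm_compact (A B : Set ℝ) (hA : IsCompact A) (hB : IsCompact B) (hA0 : A.Nonempty)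
    (hB0 : B.Nonempty) (C : Set ℝ) (hC : ∀ x ∈ A, ∀ y ∈ B, x + y ∈ C) :
    volume A + volume B ≤ volume C := by
  set a := sSup A
  set b := sInf B
  have ha : a ∈ A := hA.sSup_mem hA0
  have hb : b ∈ B := hB.sInf_mem hB0
  have h1 : volume ((fun x => x + b) '' A) = volume A := by
    simp
  have h2 : volume ((fun x => a + x) '' B) = volume B := by
    simp
  rw [← h1, ← h2]
  have hm : MeasurableSet ((fun x => a + x) '' B) := (hB.image (by fun_prop)).measurableSet
  rw [← measure_union₀ hm.nullMeasurableSet]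
  · apply measure_mono
    rintro z (⟨x, hx, rfl⟩ | ⟨y, hy, rfl⟩)
    · exact hC _ hx _ hb
    · exact hC _ ha _ hy
  · have : ((fun x => x + b) '' A) ∩ ((fun x => a + x) '' B) ⊆ {a + b} := by
      rintro z ⟨⟨x, hx, rfl⟩, ⟨y, hy, hxy⟩⟩
      have e1 : x ≤ a := le_csSup hA.bddAbove hx
      have e2 : b ≤ y := csInf_le hB.bddBelow hy
      simp only [mem_singleton_iff] at *
      linarith
    exact measure_mono_null this (by simp)

lemma aux_bm_meas (A B : Set ℝ) (hA : MeasurableSet A) (hB : MeasurableSet B) (hA0 : A.Nonempty)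
    (hB0 : B.Nonempty) (C : Set ℝ) (hC : ∀ x ∈ A, ∀ y ∈ B, x + y ∈ C) :
    volume A + volume B ≤ volume C := by
  obtain ⟨a, ha⟩ := hA0
  obtain ⟨b, hb⟩ := hB0
  rw [hA.measure_eq_iSup_isCompact, hB.measure_eq_iSup_isCompact]
  simp only [iSup_and']
  refine ENNReal.biSup_add_biSup_le' ⟨∅, by simp⟩ ⟨∅, by simp⟩ ?_
  rintro K1 ⟨h1, h1'⟩ K2 ⟨h2, h2'⟩
  refine le_trans (add_le_add (measure_mono (subset_insert a K1)) (measure_mono (subset_insert b K2))) ?_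
  refine aux_bm_compact _ _ (h1'.insert a) (h2'.insert b) ⟨a, by simp⟩ ⟨b, by simp⟩ C ?_
  rintro x hx y hy
  refine hC x ?_ y ?_
  · rcases hx with rfl | hx
    exacts [ha, h1 hx]
  · rcases hy with rfl | hy
    exacts [hb, h2 hy]

lemma aux_amgm (a b : ℝ) (ha : 0 < a) (hb : 0 < b) (hab : a + b = 1) (x y : ℝ≥0∞) :
    x ^ a * y ^ b ≤ ENNReal.ofReal a * x + ENNReal.ofReal b * y := by
  by_cases hx : x = ∞
  · subst hx
    rw [ENNReal.mul_top (by simpa using ha)]; simp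
  by_cases hy : y = ∞
  · subst hy
    rw [ENNReal.mul_top (a := ENNReal.ofReal b) (by simpa using hb)]; simp
  lift x to ℝ≥0 using hx
  lift y to ℝ≥0 using hy
  have := NNReal.geom_mean_le_arith_mean2_weighted ⟨a, ha.le⟩ ⟨b, hb.le⟩ x y (NNReal.eq hab)
  rw [← ENNReal.coe_rpow_of_nonneg _ ha.le, ← ENNReal.coe_rpow_of_nonneg _ hb.le,
    ENNReal.ofReal_eq_coe_nnreal ha.le, ENNReal.ofReal_eq_coe_nnreal hb.le]
  exact_mod_cast this

lemma aux_pl1_norm (a b : ℝ) (ha : 0 < a) (hb : 0 < b) (hab : a + b = 1) (f g h : ℝ → ℝ)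
    (hf : Measurable f) (hg : Measurable g) (hh : Measurable h)
    (hf0 : ∀ x, 0 ≤ f x) (hg0 : ∀ x, 0 ≤ g x) (hh0 : ∀ x, 0 ≤ h x)
    (hf1 : ∀ x, f x ≤ 1) (hg1 : ∀ x, g x ≤ 1)
    (hf2 : ∀ t < 1, ∃ x, t < f x) (hg2 : ∀ t < 1, ∃ x, t < g x)
    (H : ∀ x y, f x ^ a * g y ^ b ≤ h (a * x + b * y)) :
    (∫⁻ x, ENNReal.ofReal (f x)) ^ a * (∫⁻ x, ENNReal.ofReal (g x)) ^ b
      ≤ ∫⁻ x, ENNReal.ofReal (h x) := by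
  refine (aux_amgm a b ha hb hab _ _).trans ?_
  rw [lintegral_eq_lintegral_meas_lt _ (.of_forall hf0) hf.aemeasurable,
    lintegral_eq_lintegral_meas_lt _ (.of_forall hg0) hg.aemeasurable,
    lintegral_eq_lintegral_meas_lt _ (.of_forall hh0) hh.aemeasurable]
  have anti : ∀ k : ℝ → ℝ, Measurable (fun t => volume {x | t < k x}) := by
    intro k
    apply Antitone.measurable
    intro s t hst
    exact measure_mono fun x hx => lt_of_le_of_lt hst hx
  rw [← lintegral_const_mul _ (anti f), ← lintegral_const_mul _ (anti g),
    ← lintegral_add_left ((anti f).const_mul _)]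
  refine setLIntegral_mono (anti h) ?_
  intro t ht
  have ht : 0 < t := ht
  by_cases ht1 : t < 1
  · have e1 : ENNReal.ofReal a * volume {x | t < f x} = volume (a • {x | t < f x}) := by
      rw [Measure.addHaar_smul]; simp [abs_of_pos ha]
    have e2 : ENNReal.ofReal b * volume {x | t < g x} = volume (b • {x | t < g x}) := by
      rw [Measure.addHaar_smul]; simp [abs_of_pos hb]
    rw [e1, e2]
    apply aux_bm_meas
    · exact (measurableSet_lt measurable_const hf).const_smul₀ a
    · exact (measurableSet_lt measurable_const hg).const_smul₀ b
    · exact Set.Nonempty.smul_set (hf2 t ht1)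
    · exact Set.Nonempty.smul_set (hg2 t ht1)
    · rintro _ ⟨x, hx, rfl⟩ _ ⟨y, hy, rfl⟩
      simp only [mem_ofPred_eq, smul_eq_mul] at *
      refine lt_of_lt_of_le ?_ (H x y)
      calc t = t ^ a * t ^ b := by rw [← rpow_add ht, hab, rpow_one]
        _ < f x ^ a * g y ^ b := by
          gcongr
  · have : ∀ k : ℝ → ℝ, (∀ x, k x ≤ 1) → {x | t < k x} = ∅ := by
      intro k hk
      ext x; simp; linarith [hk x]
    rw [this f hf1, this g hg1]; simp

lemma aux_pl1_bdd (a b : ℝ) (ha : 0 < a) (hb : 0 < b) (hab : a + b = 1) (f g h : ℝ → ℝ≥0∞)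
    (hf : Measurable f) (hg : Measurable g) (hh : Measurable h)
    (hf1 : (⨆ x, f x) ≠ ∞) (hg1 : (⨆ x, g x) ≠ ∞)
    (H : ∀ x y, f x ^ a * g y ^ b ≤ h (a * x + b * y)) :
    (∫⁻ x, f x) ^ a * (∫⁻ x, g x) ^ b ≤ ∫⁻ x, h x := by
  set M := ⨆ x, f x with hM
  set L := ⨆ x, g x with hL
  by_cases hM0 : M = 0
  · have : ∀ x, f x = 0 := by simpa [hM] using hM0
    simp [this, ha]
  by_cases hL0 : L = 0
  · have : ∀ x, g x = 0 := by simpa [hL] using hL0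
    simp [this, hb]
  have key : ∀ (k : ℝ → ℝ≥0∞) (K : ℝ≥0∞), K ≠ 0 → K ≠ ∞ → (∀ x, k x ≠ ∞) → 
      ∫⁻ x, k x = K * ∫⁻ x, ENNReal.ofReal ((k x / K).toReal) := by
    intro k K h0 h1 hk
    rw [← lintegral_const_mul' _ _ h1]
    congr 1; ext x
    rw [ENNReal.ofReal_toReal (ENNReal.div_ne_top (hk x) h0), ENNReal.mul_div_cancel h0 h1]
  have hfM : ∀ x, f x ≤ M := fun x => le_iSup f x
  have hgL : ∀ x, g x ≤ L := fun x => le_iSup g x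
  set P := M ^ a * L ^ b with hP
  have hP1 : P ≠ ∞ := ENNReal.mul_ne_top (ENNReal.rpow_ne_top_of_nonneg ha.le hf1)
    (ENNReal.rpow_ne_top_of_nonneg hb.le hg1)
  have hP0 : P ≠ 0 := by
    simp [hP, hM0, hL0, hf1, hg1]
  have h3 : ∫⁻ x, min (h x) P ≤ ∫⁻ x, h x := lintegral_mono fun x => min_le_left _ _
  refine le_trans ?_ h3
  rw [key f M hM0 hf1 fun x => ne_top_of_le_ne_top hf1 (hfM x),
    key g L hL0 hg1 fun x => ne_top_of_le_ne_top hg1 (hgL x),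
    key (fun x => min (h x) P) P hP0 hP1 fun x => ne_top_of_le_ne_top hP1 (min_le_right _ _),
    ENNReal.mul_rpow_of_nonneg _ _ ha.le, ENNReal.mul_rpow_of_nonneg _ _ hb.le, mul_mul_mul_comm]
  gcongr
  have dn : ∀ (k : ℝ → ℝ≥0∞) (K : ℝ≥0∞), K ≠ 0 → K ≠ ∞ → (∀ x, k x ≤ K) → ∀ x, (k x / K).toReal ≤ 1 := by
    intro k K h0 h1 hk x
    apply ENNReal.toReal_le_of_le_ofReal zero_le_one
    rw [ENNReal.ofReal_one, ENNReal.div_le_iff h0 h1, one_mul]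
    exact hk x
  have ds : ∀ (k : ℝ → ℝ≥0∞), (⨆ x, k x) ≠ 0 → (⨆ x, k x) ≠ ∞ → ∀ t < (1:ℝ), ∃ x, t < (k x / (⨆ x, k x)).toReal := by
    intro k h0 h1 t ht
    have : ENNReal.ofReal t * (⨆ x, k x) < ⨆ x, k x := by
      calc _ < 1 * (⨆ x, k x) := ENNReal.mul_lt_mul_left h0 h1 (by simpa using ht)
        _ = _ := one_mul _
    obtain ⟨x, hx⟩ := lt_iSup_iff.1 this
    refine ⟨x, ?_⟩
    rw [← ENNReal.lt_div_iff_mul_lt (Or.inl h0) (Or.inl h1)] at hx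
    have hfin : k x / (⨆ x, k x) ≠ ∞ := ENNReal.div_ne_top (ne_top_of_le_ne_top h1 (le_iSup k x)) h0
    rw [← ENNReal.ofReal_toReal hfin] at hx
    exact (ENNReal.ofReal_lt_ofReal_iff').1 hx |>.1
  apply aux_pl1_norm a b ha hb hab
  · fun_prop
  · fun_prop
  · fun_prop
  · intro x; positivity
  · intro x; positivity
  · intro x; positivity
  · exact dn f M hM0 hf1 hfM
  · exact dn g L hL0 hg1 hgL
  · exact ds f hM0 hf1
  · exact ds g hL0 hg1
  · intro x y
    rw [ENNReal.toReal_rpow, ENNReal.toReal_rpow, ← ENNReal.toReal_mul]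
    apply ENNReal.toReal_mono
    · exact ENNReal.div_ne_top (ne_top_of_le_ne_top hP1 (min_le_right _ _)) hP0
    rw [ENNReal.div_rpow_of_nonneg _ _ ha.le, ENNReal.div_rpow_of_nonneg _ _ hb.le]
    rw [ENNReal.le_div_iff_mul_le (Or.inl hP0) (Or.inl hP1)]
    have : f x ^ a / M ^ a * (g y ^ b / L ^ b) * P = f x ^ a * g y ^ b := by
      have c1 : f x ^ a / M ^ a * M ^ a = f x ^ a := ENNReal.div_mul_cancel (by simp [hM0, hf1]) (by simp [hM0, hf1])
      have c2 : g y ^ b / L ^ b * L ^ b = g y ^ b := ENNReal.div_mul_cancel (by simp [hL0, hg1]) (by simp [hL0, hg1])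
      rw [hP, mul_mul_mul_comm, c1, c2]
    rw [this]
    apply le_min (H x y)
    rw [hP]
    gcongr
    · exact hfM x
    · exact hgL y

lemma aux_pl1 (a b : ℝ) (ha : 0 < a) (hb : 0 < b) (hab : a + b = 1) (f g h : ℝ → ℝ≥0∞)
    (hf : Measurable f) (hg : Measurable g) (hh : Measurable h)
    (H : ∀ x y, f x ^ a * g y ^ b ≤ h (a * x + b * y)) :
    (∫⁻ x, f x) ^ a * (∫⁻ x, g x) ^ b ≤ ∫⁻ x, h x := by
  have lim : ∀ k : ℝ → ℝ≥0∞, Measurable k → 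
      Filter.Tendsto (fun n : ℕ => ∫⁻ x, min (k x) n) Filter.atTop (nhds (∫⁻ x, k x)) := by
    intro k hk
    apply lintegral_tendsto_of_tendsto_of_monotone
    · intro n; fun_prop
    · refine .of_forall fun x => ?_
      intro m n hmn
      dsimp only
      gcongr
    · refine .of_forall fun x => ?_
      have := (tendsto_const_nhds (x := k x)).min ENNReal.tendsto_nat_nhds_top
      simpa using this
  by_cases hf0 : ∫⁻ x, f x = 0
  · simp [hf0, ha]
  by_cases hg0 : ∫⁻ x, g x = 0
  · simp [hg0, hb]
  have t1 := (lim f hf).ennrpow_const a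
  have t2 := (lim g hg).ennrpow_const b
  have t3 := ENNReal.Tendsto.mul t1 (Or.inl (by simp [hf0, ha, ha.le])) t2 (Or.inl (by simp [hg0, hb, hb.le]))
  refine le_of_tendsto t3 (.of_forall fun n => ?_)
  have hfin : ∀ k : ℝ → ℝ≥0∞, (⨆ x, min (k x) (n : ℝ≥0∞)) ≠ ∞ := fun k =>
    ne_top_of_le_ne_top (ENNReal.natCast_ne_top n) (iSup_le fun x => min_le_right _ _)
  refine aux_pl1_bdd a b ha hb hab _ _ h (by fun_prop) (by fun_prop) hh (hfin f) (hfin g) ?_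
  intro x y
  refine le_trans ?_ (H x y)
  gcongr <;> exact min_le_left _ _

lemma aux_pl (a b : ℝ) (ha : 0 < a) (hb : 0 < b) (hab : a + b = 1) (n : ℕ) :
    ∀ (f g h : (Fin n → ℝ) → ℝ≥0∞) (_ : Measurable f) (_ : Measurable g) (_ : Measurable h)
    (_ : ∀ x y, f x ^ a * g y ^ b ≤ h (a • x + b • y)),
    (∫⁻ x, f x) ^ a * (∫⁻ x, g x) ^ b ≤ ∫⁻ x, h x := by
  induction n with
  | zero =>
    intro f g h hf hg hh H
    have : ∀ k : (Fin 0 → ℝ) → ℝ≥0∞, ∫⁻ x, k x = k 0 := by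
      intro k
      rw [Measure.volume_pi_eq_dirac 0 (ι := Fin 0) (α := fun _ => ℝ)]
      simp
    rw [this, this, this]
    simpa using H 0 0
  | succ n ih =>
    intro f g h hf hg hh H
    have e := (volume_preserving_piFinSuccAbove (fun _ : Fin (n + 1) => ℝ) 0).symm
    have key : ∀ k : (Fin (n+1) → ℝ) → ℝ≥0∞, Measurable k →
        ∫⁻ x, k x = ∫⁻ s : ℝ, ∫⁻ y : Fin n → ℝ, k (Fin.cons s y) := by
      intro k hk
      rw [← e.lintegral_comp hk]
      rw [Measure.volume_eq_prod, lintegral_prod _ (by fun_prop)]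
      simp [Fin.insertNthEquiv]
    have meas : ∀ k : (Fin (n+1) → ℝ) → ℝ≥0∞, Measurable k → Measurable (fun z : ℝ × (Fin n → ℝ) => k (Fin.cons z.1 z.2)) := by
      intro k hk
      have := hk.comp e.measurable
      simpa [Function.comp_def, Fin.insertNthEquiv] using this
    rw [key f hf, key g hg, key h hh]
    refine aux_pl1 a b ha hb hab _ _ _ (meas f hf).lintegral_prod_right' (meas g hg).lintegral_prod_right' (meas h hh).lintegral_prod_right' ?_
    intro s t
    refine ih (fun y => f (Fin.cons s y)) (fun y => g (Fin.cons t y)) (fun y => h (Fin.cons (a * s + b * t) y)) ?_ ?_ ?_ ?_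
    · exact (meas f hf).comp measurable_prodMk_left
    · exact (meas g hg).comp measurable_prodMk_left
    · exact (meas h hh).comp measurable_prodMk_left
    · intro x y
      refine (H _ _).trans (le_of_eq ?_)
      congr 1
      ext i
      refine Fin.cases ?_ (fun j => ?_) i <;> simp

lemma aux_bm_mul {N : ℕ} (a b : ℝ) (ha : 0 < a) (hb : 0 < b) (hab : a + b = 1)
    (X Y Z : Set (EuclideanSpace ℝ (Fin N))) (hX : MeasurableSet X) (hY : MeasurableSet Y)
    (hZ : MeasurableSet Z) (H : ∀ x ∈ X, ∀ y ∈ Y, a • x + b • y ∈ Z) :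
    volume X ^ a * volume Y ^ b ≤ volume Z := by
  have e := PiLp.volume_preserving_toLp (Fin N)
  have key : ∀ S : Set (EuclideanSpace ℝ (Fin N)), MeasurableSet S →
     volume S = ∫⁻ x, S.indicator (fun _ => (1:ℝ≥0∞)) (WithLp.toLp 2 x) := by
    intro S hS
    rw [e.lintegral_comp (f := S.indicator (fun _ => (1:ℝ≥0∞))) ((measurable_indicator_const_iff 1).2 hS)]
    simp [hS]
  have meas : ∀ S : Set (EuclideanSpace ℝ (Fin N)), MeasurableSet S →
     Measurable (fun x : Fin N → ℝ => S.indicator (fun _ => (1:ℝ≥0∞)) (WithLp.toLp 2 x)) := by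
    intro S hS
    exact ((measurable_indicator_const_iff 1).2 hS).comp e.measurable
  rw [key X hX, key Y hY, key Z hZ]
  refine aux_pl a b ha hb hab N _ _ _ (meas X hX) (meas Y hY) (meas Z hZ) ?_
  intro x y
  by_cases hx : WithLp.toLp 2 x ∈ X
  · by_cases hy : WithLp.toLp 2 y ∈ Y
    · have := H _ hx _ hy
      simp only [WithLp.toLp_add, WithLp.toLp_smul]
      simp [hx, hy, this]
    · simp [hy, hb]
  · simp [hx, ha]

lemma aux_bm_ball {N : ℕ} (A : Set (EuclideanSpace ℝ (Fin N))) (hA : IsOpen A) (ρ h : ℝ) (hρ : 0 < ρ)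
    (hh : 0 < h) (hAρ : volume (ball (0 : EuclideanSpace ℝ (Fin N)) ρ) ≤ volume A) :
    volume (ball (0 : EuclideanSpace ℝ (Fin N)) (ρ + h)) ≤ volume (thickening h A) := by
  set a := ρ / (ρ + h) with ha'
  set b := h / (ρ + h) with hb'
  have hs : 0 < ρ + h := by positivity
  have ha : 0 < a := by positivity
  have hb : 0 < b := by positivity
  have hab : a + b = 1 := by rw [ha', hb']; field_simp
  have := aux_bm_mul (N := N) a b ha hb hab (a⁻¹ • A) (b⁻¹ • ball 0 h) (thickening h A) (hA.measurableSet.const_smul₀ _) (measurableSet_ball.const_smul₀ _) isOpen_thickening.measurableSet ?_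
  · refine le_trans ?_ this
    have e1 : b⁻¹ • ball (0 : EuclideanSpace ℝ (Fin N)) h = ball 0 (ρ + h) := by
      rw [_root_.smul_ball (by positivity)]
      simp [abs_of_pos hb, hb', abs_of_pos hh, abs_of_pos hs]
      congr 1; field_simp
    have e2 : volume (ball (0 : EuclideanSpace ℝ (Fin N)) (ρ + h)) ≤ volume (a⁻¹ • A) := by
      have : ball (0 : EuclideanSpace ℝ (Fin N)) (ρ + h) = a⁻¹ • ball 0 ρ := by
        rw [_root_.smul_ball (by positivity)]
        simp [abs_of_pos ha, ha', abs_of_pos hρ, abs_of_pos hs]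
        congr 1; field_simp
      rw [this, Measure.addHaar_smul, Measure.addHaar_smul]
      gcongr
    rw [e1]
    calc volume (ball (0 : EuclideanSpace ℝ (Fin N)) (ρ + h)) = volume (ball (0 : EuclideanSpace ℝ (Fin N)) (ρ + h)) ^ a * volume (ball (0 : EuclideanSpace ℝ (Fin N)) (ρ + h)) ^ b := by
          rw [← ENNReal.rpow_add_of_nonneg _ _ ha.le hb.le, hab, ENNReal.rpow_one]
      _ ≤ _ := by gcongr
  · rintro _ ⟨x, hx, rfl⟩ _ ⟨y, hy, rfl⟩
    simp only [smul_smul, mul_inv_cancel₀ ha.ne', mul_inv_cancel₀ hb.ne', one_smul]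
    rw [mem_thickening_iff]
    refine ⟨x, hx, ?_⟩
    simpa [dist_eq_norm] using hy

lemma vb_eq {N : ℕ} (hN : 0 < N) (ρ : ℝ) (h : 0 ≤ ρ) : volume (ball (0 : EuclideanSpace ℝ (Fin N)) ρ)
    = ENNReal.ofReal (ρ ^ N) * volume (ball (0 : EuclideanSpace ℝ (Fin N)) 1) := by
  have : Nonempty (Fin N) := ⟨⟨0, hN⟩⟩
  have := Measure.addHaar_ball (volume : Measure (EuclideanSpace ℝ (Fin N))) 0 h
  simpa using this

lemma vb1_pos {N : ℕ} : volume (ball (0 : EuclideanSpace ℝ (Fin N)) 1) ≠ 0 :=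
  (measure_ball_pos _ _ one_pos).ne'

lemma vb_lt {N : ℕ} (hN : 0 < N) {ρ σ : ℝ} (h : 0 ≤ ρ) (h' : ρ < σ) :
    volume (ball (0 : EuclideanSpace ℝ (Fin N)) ρ) < volume (ball (0 : EuclideanSpace ℝ (Fin N)) σ) := by
  rw [vb_eq hN ρ h, vb_eq hN σ (h.trans h'.le)]
  apply ENNReal.mul_lt_mul_left vb1_pos measure_ball_lt_top.ne
  have : ρ ^ N < σ ^ N := pow_lt_pow_left₀ h' h hN.ne'
  exact (ENNReal.ofReal_lt_ofReal_iff (lt_of_le_of_lt (by positivity) this)).2 this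

lemma vb_lt_iff {N : ℕ} (hN : 0 < N) {ρ σ : ℝ} (h' : 0 ≤ σ) :
    volume (ball (0 : EuclideanSpace ℝ (Fin N)) ρ) < volume (ball (0 : EuclideanSpace ℝ (Fin N)) σ) → ρ < σ := by
  intro h
  by_contra! h2
  exact absurd h (not_lt.2 (measure_mono (ball_subset_ball h2)))

lemma vb_surj {N : ℕ} (hN : 0 < N) (m : ℝ≥0∞) (hm : m ≠ ∞) : ∃ R, 0 ≤ R ∧
    volume (ball (0 : EuclideanSpace ℝ (Fin N)) R) = m := by
  set ω := volume (ball (0 : EuclideanSpace ℝ (Fin N)) 1)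
  have h0 : ω ≠ 0 := vb1_pos
  have h1 : ω ≠ ∞ := measure_ball_lt_top.ne
  have hm' : m / ω ≠ ∞ := ENNReal.div_ne_top hm h0
  refine ⟨(m / ω).toReal ^ (1 / (N : ℝ)), by positivity, ?_⟩
  rw [vb_eq hN _ (by positivity), ← rpow_natCast, ← rpow_mul (by positivity)]
  rw [one_div, inv_mul_cancel₀ (by positivity), rpow_one, ENNReal.ofReal_toReal hm',
    ENNReal.div_mul_cancel h0 h1]

noncomputable def rearr {N : ℕ} (f : EuclideanSpace ℝ (Fin N) → ℝ) (ρ : ℝ) : ℝ :=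
  sInf {s : ℝ | 0 ≤ s ∧ volume {x | s < f x} ≤ volume (ball (0 : EuclideanSpace ℝ (Fin N)) ρ)}

section
variable {N : ℕ} (f : EuclideanSpace ℝ (Fin N) → ℝ)

lemma rearr_nonneg (ρ : ℝ) : 0 ≤ rearr f ρ := Real.sInf_nonneg fun _ hx => hx.1

lemma lt_rearr_iff (M : ℝ) (hM : ∀ x, f x ≤ M) (ρ s : ℝ) (hs : 0 ≤ s) :
    s < rearr f ρ ↔ volume (ball (0 : EuclideanSpace ℝ (Fin N)) ρ) < volume {x | s < f x} := by
  have hbdd : BddBelow {s : ℝ | 0 ≤ s ∧ volume {x | s < f x} ≤ volume (ball (0 : EuclideanSpace ℝ (Fin N)) ρ)} :=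
    ⟨0, fun x hx => hx.1⟩
  constructor
  · intro h
    by_contra! h2
    exact absurd h (not_lt.2 (csInf_le hbdd ⟨hs, h2⟩))
  · intro h
    have e : {x | s < f x} = ⋃ n : ℕ, {x | s + 1 / ((n : ℝ) + 1) < f x} := by
      ext x
      simp only [mem_ofPred_eq, mem_iUnion]
      constructor
      · intro hx
        obtain ⟨n, hn⟩ := exists_nat_one_div_lt (sub_pos.2 hx)
        exact ⟨n, by linarith⟩
      · rintro ⟨n, hn⟩
        have : 0 < 1 / ((n : ℝ) + 1) := by positivity
        linarith
    have hmono : Monotone (fun n : ℕ => {x | s + 1 / ((n : ℝ) + 1) < f x}) := by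
      intro m n hmn x hx
      simp only [mem_ofPred_eq] at *
      have : 1 / ((n : ℝ) + 1) ≤ 1 / ((m : ℝ) + 1) := by
        apply one_div_le_one_div_of_le <;> norm_cast <;> omega
      linarith
    rw [e, hmono.measure_iUnion] at h
    obtain ⟨n, hn⟩ := lt_iSup_iff.1 h
    have hpos : 0 < 1 / ((n : ℝ) + 1) := by positivity
    refine lt_of_lt_of_le (show s < s + 1 / ((n : ℝ) + 1) by linarith) ?_
    apply le_csInf
    · refine ⟨max M 0, le_max_right _ _, ?_⟩
      have : {x | max M 0 < f x} = ∅ := by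
        ext x; simp; intro hx; linarith [hM x]
      rw [this]; simp
    · rintro t ⟨ht0, ht⟩
      by_contra! h3
      refine absurd (lt_of_lt_of_le hn ?_) (not_lt.2 ht)
      exact measure_mono fun x (hx : _ < _) => h3.trans hx

lemma rearr_anti (M : ℝ) (hM : ∀ x, f x ≤ M) : Antitone (rearr f) := by
  intro ρ σ h
  by_contra! h2
  have h3 := (lt_rearr_iff f M hM σ _ (rearr_nonneg f ρ)).1 h2
  have := (lt_rearr_iff f M hM ρ _ (rearr_nonneg f ρ)).2 (lt_of_le_of_lt (measure_mono (ball_subset_ball h)) h3)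
  exact lt_irrefl _ this

lemma rearr_zero (M : ℝ) (hM : ∀ x, f x ≤ M) (r : ℝ) (hr : ∀ x, r ≤ ‖x‖ → f x = 0) (ρ : ℝ) (hρ : r ≤ ρ) :
    rearr f ρ = 0 := by
  by_contra h
  have h2 := lt_of_le_of_ne (rearr_nonneg f ρ) (Ne.symm h)
  have h3 := (lt_rearr_iff f M hM ρ 0 le_rfl).1 h2
  refine absurd h3 (not_lt.2 (measure_mono ?_))
  intro x (hx : 0 < f x)
  by_contra h4
  simp only [mem_ball, dist_zero_right, not_lt] at h4
  rw [hr x (hρ.trans h4)] at hx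
  exact lt_irrefl _ hx

lemma rearr_vol (hN : 0 < N) (M : ℝ) (hM : ∀ x, f x ≤ M) (r : ℝ) (hr : ∀ x, r ≤ ‖x‖ → f x = 0)
    (s : ℝ) (hs : 0 ≤ s) :
    ∃ R, 0 ≤ R ∧ {x : EuclideanSpace ℝ (Fin N) | s < rearr f ‖x‖} = ball 0 R ∧
      volume {x | s < f x} = volume (ball (0 : EuclideanSpace ℝ (Fin N)) R) := by
  have hfin : volume {x | s < f x} ≠ ∞ := by
    refine ne_top_of_le_ne_top (measure_ball_lt_top (x := (0 : EuclideanSpace ℝ (Fin N))) (r := r)).ne (measure_mono ?_)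
    intro x (hx : s < f x)
    by_contra h4
    simp only [mem_ball, dist_zero_right, not_lt] at h4
    rw [hr x h4] at hx
    linarith
  obtain ⟨R, hR, hR2⟩ := vb_surj hN _ hfin
  refine ⟨R, hR, ?_, hR2.symm⟩
  ext x
  simp only [mem_ofPred_eq, mem_ball, dist_zero_right]
  rw [lt_rearr_iff f M hM _ _ hs, ← hR2]
  exact ⟨vb_lt_iff hN hR, vb_lt hN (norm_nonneg x)⟩

lemma rearr_lip (hN : 0 < N) (M : ℝ) (hM : ∀ x, f x ≤ M) (K : ℝ≥0) (hf : LipschitzWith K f)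
    (r : ℝ) (hr : ∀ x, r ≤ ‖x‖ → f x = 0) : LipschitzWith K (rearr f) := by
  have key : ∀ ρ h : ℝ, 0 < h → rearr f ρ ≤ rearr f (ρ + h) + K * h := by
    intro ρ h hh
    by_contra! hlt
    set s := rearr f (ρ + h) with hs'
    have hs : 0 ≤ s := rearr_nonneg f _
    have h1 := (lt_rearr_iff f M hM ρ _ (by positivity)).1 hlt
    obtain ⟨R, hR, -, hR2⟩ := rearr_vol f hN M hM r hr (s + K * h) (by positivity)
    rw [hR2] at h1
    have hρR := vb_lt_iff hN hR h1
    have hR0 : 0 < R := by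
      rcases hR.lt_or_eq with h | h
      · exact h
      · rw [← h] at h1; simp at h1
    have hop : IsOpen {x | s + K * h < f x} := isOpen_lt continuous_const hf.continuous
    have h2 := aux_bm_ball {x | s + K * h < f x} hop R h hR0 hh hR2.ge
    have h3 : thickening h {x | s + K * h < f x} ⊆ {x | s < f x} := by
      intro x hx
      obtain ⟨y, hy, hxy⟩ := mem_thickening_iff.1 hx
      have hy : s + K * h < f y := hy
      have h4 := hf.dist_le_mul y x
      rw [Real.dist_eq, dist_comm] at h4
      have h5 := le_abs_self (f y - f x)
      have h6 : K * dist x y ≤ K * h := by gcongr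
      show s < f x
      linarith
    have h4 : volume (ball (0 : EuclideanSpace ℝ (Fin N)) (ρ + h)) < volume {x | s < f x} := by
      refine lt_of_lt_of_le ?_ (h2.trans (measure_mono h3))
      rcases le_or_gt 0 (ρ + h) with h7 | h7
      · exact vb_lt hN h7 (by linarith)
      · rw [ball_eq_empty.2 h7.le]
        simpa using measure_ball_pos volume _ (by positivity)
    exact lt_irrefl _ ((lt_rearr_iff f M hM _ _ hs).2 h4)
  apply LipschitzWith.of_dist_le_mul
  have key2 : ∀ x y : ℝ, x < y → dist (rearr f x) (rearr f y) ≤ K * dist x y := by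
    intro x y hxy
    have h1 := key x (y - x) (by linarith)
    have h2 := rearr_anti f M hM hxy.le
    rw [Real.dist_eq, Real.dist_eq, abs_of_nonneg (by linarith), abs_of_neg (by linarith)]
    simp only [add_sub_cancel] at h1
    linarith
  intro x y
  rcases lt_trichotomy x y with h | h | h
  · exact key2 x y h
  · simp [h]
  · rw [dist_comm, dist_comm x]; exact key2 y x h
end

noncomputable def hopf {N : ℕ} (P t : ℝ) (f : EuclideanSpace ℝ (Fin N) → ℝ) (x : EuclideanSpace ℝ (Fin N)) : ℝ :=
  ⨆ y, (f y - t * ((‖x - y‖ / t) ^ P / P))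

section
variable {N : ℕ} (f : EuclideanSpace ℝ (Fin N) → ℝ) (P t M : ℝ) (hP : 1 < P) (ht : 0 < t) (hM : ∀ x, f x ≤ M)
include hP ht hM

lemma hopf_bdd (x : EuclideanSpace ℝ (Fin N)) :
    BddAbove (range fun y => (f y - t * ((‖x - y‖ / t) ^ P / P))) := by
  refine ⟨M, ?_⟩
  rintro _ ⟨y, rfl⟩
  have : 0 ≤ t * ((‖x - y‖ / t) ^ P / P) := by positivity
  dsimp only
  linarith [hM y]

lemma le_hopf (x y : EuclideanSpace ℝ (Fin N)) : f y - t * ((‖x - y‖ / t) ^ P / P) ≤ hopf P t f x :=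
  le_ciSup (hopf_bdd f P t M hP ht hM x) y

lemma self_le_hopf (x : EuclideanSpace ℝ (Fin N)) : f x ≤ hopf P t f x := by
  have := le_hopf f P t M hP ht hM x x
  have h0 : P ≠ 0 := by linarith
  simpa [Real.zero_rpow h0] using this

lemma hopf_open (s : ℝ) : IsOpen {x | s < hopf P t f x} := by
  have : {x | s < hopf P t f x} = ⋃ y, {x | s < f y - t * ((‖x - y‖ / t) ^ P / P)} := by
    ext x
    simp only [mem_ofPred_eq, mem_iUnion]
    exact ⟨fun h => exists_lt_of_lt_ciSup h, fun ⟨y, hy⟩ => hy.trans_le (le_hopf f P t M hP ht hM x y)⟩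
  rw [this]
  refine isOpen_iUnion fun y => isOpen_lt continuous_const ?_
  have h0 : 0 ≤ P := by linarith
  have : Continuous fun x : EuclideanSpace ℝ (Fin N) => (‖x - y‖ / t) ^ P :=
    Continuous.rpow_const (by fun_prop) fun _ => Or.inr h0
  fun_prop

lemma hopf_meas : Measurable (hopf P t f) :=
  measurable_of_Ioi fun s => (hopf_open f P t M hP ht hM s).measurableSet
end

lemma hopf_comp {N : ℕ} (hN : 0 < N) (f : EuclideanSpace ℝ (Fin N) → ℝ) (w : ℝ → ℝ) (P t M : ℝ) (hP : 1 < P) (ht : 0 < t)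
    (hM : ∀ x, f x ≤ M) (hf : Continuous f)
    (hvol : ∀ s, 0 ≤ s → ∃ R, 0 ≤ R ∧ {x : EuclideanSpace ℝ (Fin N) | s < w ‖x‖} = ball 0 R ∧
      volume {x | s < f x} = volume (ball (0 : EuclideanSpace ℝ (Fin N)) R)) (s : ℝ) (hs : 0 ≤ s) :
    volume {x : EuclideanSpace ℝ (Fin N) | s < hopf P t (fun x => w ‖x‖) x} ≤ volume {x | s < hopf P t f x} := by
  by_cases hfin : volume {x | s < hopf P t f x} = ∞
  · rw [hfin]; exact le_top
  obtain ⟨R, hR, hR2⟩ := vb_surj hN _ hfin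
  rw [← hR2]
  apply measure_mono
  intro x hx
  obtain ⟨y, hy⟩ := exists_lt_of_lt_ciSup (show s < ⨆ y, _ from hx)
  set d := ‖x - y‖ with hd
  have hd0 : 0 ≤ d := norm_nonneg _
  set τ := s + t * ((d / t) ^ P / P) with hτ
  have hτ0 : 0 ≤ τ := by positivity
  obtain ⟨R', hR', hball, hv⟩ := hvol τ hτ0
  have hyR : ‖y‖ < R' := by
    have : y ∈ {x : EuclideanSpace ℝ (Fin N) | τ < w ‖x‖} := by
      show τ < w ‖y‖
      linarith
    rw [hball] at this
    simpa using this
  have hR'0 : 0 < R' := lt_of_le_of_lt (norm_nonneg _) hyR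
  have hle : R' + d ≤ R := by
    by_contra! hlt
    have h1 := vb_lt hN hR hlt
    refine absurd h1 (not_lt.2 ?_)
    rw [hR2]
    rcases hd0.lt_or_eq with h | h
    · refine (aux_bm_ball {x | τ < f x} (isOpen_lt continuous_const hf) R' d hR'0 h hv.ge).trans (measure_mono ?_)
      intro z hz
      obtain ⟨u, hu, hzu⟩ := mem_thickening_iff.1 hz
      have hu : τ < f u := hu
      refine lt_of_lt_of_le ?_ (le_hopf f P t M hP ht hM z u)
      rw [dist_eq_norm] at hzu
      have : t * ((‖z - u‖ / t) ^ P / P) ≤ t * ((d / t) ^ P / P) := by gcongr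
      linarith
    · rw [← h, add_zero, ← hv]
      apply measure_mono
      intro z hz
      have hz : τ < f z := hz
      refine lt_of_lt_of_le ?_ (self_le_hopf f P t M hP ht hM z)
      have : 0 ≤ t * ((d / t) ^ P / P) := by positivity
      linarith
  rw [mem_ball, dist_zero_right]
  have : ‖x‖ ≤ ‖x - y‖ + ‖y‖ := by simpa using norm_add_le (x - y) y
  linarith

lemma hopf_upper {N : ℕ} (f G : EuclideanSpace ℝ (Fin N) → ℝ) (p P M r r0 : ℝ) (hpP : p.HolderConjugate P)
    (hr : r0 < r) (hM : ∀ x, f x ≤ M) (hf0 : ∀ x, 0 ≤ f x) (hr0 : ∀ x, r0 ≤ ‖x‖ → f x = 0) (hG : ∀ x, 0 ≤ G x)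
    (η : ℝ) (hη : 0 < η) (h : ℝ) (hh : 0 < h)
    (hs : ∀ x y, ‖x - y‖ < h → f y ≤ f x + (G x + η) * ‖x - y‖) :
    ∃ t0 > 0, ∀ t, 0 < t → t ≤ t0 → (∀ x, r ≤ ‖x‖ → hopf P t f x ≤ 0) ∧ ∀ x, hopf P t f x ≤ f x + t * ((G x + η) ^ p / p) := by
  set h' := min h (r - r0) with hh'
  have hh'0 : 0 < h' := lt_min hh (by linarith)
  have hP1 : 1 < P := hpP.symm.lt
  have hp1 : 1 < p := hpP.lt
  have : Filter.Tendsto (fun t : ℝ => t ^ (P - 1) * (M * P)) (nhdsWithin 0 (Ioi 0)) (nhds (0 ^ (P - 1) * (M * P))) := by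
    apply Filter.Tendsto.mul_const
    exact ((continuousAt_rpow_const 0 (P - 1) (Or.inr (by linarith))).tendsto).mono_left nhdsWithin_le_nhds
  rw [Real.zero_rpow (by linarith), zero_mul] at this
  have h2 := this.eventually (gt_mem_nhds (show 0 < h' ^ P by positivity))
  obtain ⟨t0, ht0, ht1⟩ := (mem_nhdsGT_iff_exists_Ioc_subset).1 h2
  have cost : ∀ t, 0 < t → t ≤ t0 → ∀ d, h' ≤ d → M ≤ t * ((d / t) ^ P / P) := by
    intro t h1 h2 d hd
    have h3 : t ^ (P - 1) * (M * P) < h' ^ P := ht1 ⟨h1, h2⟩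
    have h4 : h' ^ P ≤ d ^ P := by gcongr
    rw [div_rpow (by linarith) h1.le]
    have : t * (d ^ P / t ^ P / P) = d ^ P / (t ^ (P - 1) * P) := by
      rw [rpow_sub_one h1.ne']; field_simp
    rw [this, le_div_iff₀ (by positivity)]
    nlinarith
  refine ⟨t0, ht0, fun t h1 h2 => ⟨?_, ?_⟩⟩
  · intro x hx
    apply ciSup_le
    intro y
    by_cases hy : r0 ≤ ‖y‖
    · rw [hr0 y hy]
      have : 0 ≤ t * ((‖x - y‖ / t) ^ P / P) := by positivity
      linarith
    · have hd : h' ≤ ‖x - y‖ := by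
        have := norm_sub_norm_le x y
        have := min_le_right h (r - r0)
        linarith
      linarith [cost t h1 h2 _ hd, hM y]
  · intro x
    have hpos : 0 ≤ t * ((G x + η) ^ p / p) := by
      have := hG x
      positivity
    apply ciSup_le
    intro y
    by_cases hy : ‖x - y‖ < h
    · have e1 := hs x y hy
      have e2 := Real.young_inequality_of_nonneg (show 0 ≤ G x + η by linarith [hG x]) (show 0 ≤ ‖x - y‖ / t by positivity) hpP
      have e3 : (G x + η) * ‖x - y‖ = t * ((G x + η) * (‖x - y‖ / t)) := by field_simp
      have e4 := mul_le_mul_of_nonneg_left e2 h1.le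
      rw [mul_add] at e4
      linarith
    · have hd : h' ≤ ‖x - y‖ := (min_le_left _ _).trans (not_lt.1 hy)
      linarith [cost t h1 h2 _ hd, hM y, hf0 x]

lemma hopf_lower {N : ℕ} (W : EuclideanSpace ℝ (Fin N) → ℝ) (p P M : ℝ) (hpP : p.HolderConjugate P)
    (hM : ∀ x, W x ≤ M) (x : EuclideanSpace ℝ (Fin N)) (u : ℕ → ℝ) (hu : ∀ n, 0 < u n) (hu2 : Filter.Tendsto u Filter.atTop (nhds 0)) :
    ENNReal.ofReal (‖fderiv ℝ W x‖ ^ p / p) ≤ 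
      Filter.liminf (fun n => ENNReal.ofReal ((hopf P (u n) W x - W x) / u n)) Filter.atTop := by
  have hP1 : 1 < P := hpP.symm.lt
  have hp1 : 1 < p := hpP.lt
  by_cases hd : DifferentiableAt ℝ W x
  swap
  · rw [fderiv_zero_of_not_differentiableAt hd, norm_zero, Real.zero_rpow (by linarith)]
    simp
  set D := fderiv ℝ W x with hD
  obtain ⟨z, hz1, hz2⟩ : ∃ z : EuclideanSpace ℝ (Fin N), D z = ‖D‖ ^ p ∧ ‖z‖ ^ P = ‖D‖ ^ p := by
    by_cases hD0 : D = 0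
    · refine ⟨0, ?_, ?_⟩
      · simp [hD0, Real.zero_rpow (show p ≠ 0 by linarith)]
      · simp [hD0, Real.zero_rpow (show p ≠ 0 by linarith), Real.zero_rpow (show P ≠ 0 by linarith)]
    · have hn : 0 < ‖D‖ := norm_pos_iff.2 hD0
      set g := (InnerProductSpace.toDual ℝ (EuclideanSpace ℝ (Fin N))).symm D with hg
      have hgn : ‖g‖ = ‖D‖ := by simp [hg]
      have hDg : D g = ‖D‖ ^ 2 := by
        rw [← InnerProductSpace.toDual_symm_apply (𝕜 := ℝ) (x := g) (y := D), ← hg, real_inner_self_eq_norm_sq, hgn]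
      refine ⟨‖D‖ ^ (p - 2) • g, ?_, ?_⟩
      · rw [map_smul, hDg, smul_eq_mul, ← rpow_natCast, ← rpow_add hn]
        norm_num
      · rw [norm_smul, hgn, norm_of_nonneg (by positivity)]
        nth_rewrite 2 [← rpow_one ‖D‖]
        rw [← rpow_add hn, ← rpow_mul hn.le]
        congr 1
        have := hpP.sub_one_mul_conj
        linarith
  have hlim : Filter.Tendsto (fun n => (W (x + u n • z) - W x) / u n - ‖z‖ ^ P / P) Filter.atTop (nhds (‖D‖ ^ p / p)) := by
    have h1 : HasDerivAt (fun s : ℝ => W (x + s • z)) (D z) 0 := by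
      have h2 : HasFDerivAt W D (x + (0:ℝ) • z) := by simpa using hd.hasFDerivAt
      have h3 : HasDerivAt (fun s : ℝ => x + s • z) z 0 := by
        simpa using ((hasDerivAt_id (0:ℝ)).smul_const z).const_add x
      exact h2.comp_hasDerivAt (0:ℝ) h3
    have h4 := (hasDerivAt_iff_tendsto_slope.1 h1).comp (tendsto_nhdsWithin_iff.2 ⟨hu2, .of_forall fun n => (hu n).ne'⟩)
    have h5 := h4.sub_const (‖z‖ ^ P / P)
    have h6 : D z - ‖z‖ ^ P / P = ‖D‖ ^ p / p := by
      rw [hz1, hz2]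
      have := hpP.inv_add_inv_eq_one
      have h7 : ‖D‖ ^ p = ‖D‖ ^ p * (p⁻¹ + P⁻¹) := by rw [this, mul_one]
      have h8 : ‖D‖ ^ p * (p⁻¹ + P⁻¹) = ‖D‖ ^ p / p + ‖D‖ ^ p / P := by ring
      linarith
    rw [h6] at h5
    refine h5.congr fun n => ?_
    simp [slope_def_field]
  have hlim2 := (ENNReal.continuous_ofReal.tendsto _).comp hlim
  rw [← hlim2.liminf_eq]
  refine Filter.liminf_le_liminf ?_
  · refine .of_forall fun n => ?_
    apply ENNReal.ofReal_le_ofReal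
    have h1 := le_hopf W P (u n) M hP1 (hu n) hM x (x + u n • z)
    have h2 : ‖x - (x + u n • z)‖ / u n = ‖z‖ := by
      rw [sub_add_cancel_left, norm_neg, norm_smul, norm_of_nonneg (hu n).le]
      field_simp [(hu n).ne']
    rw [h2] at h1
    rw [le_div_iff₀ (hu n), sub_mul, div_mul_cancel₀ _ (hu n).ne']
    linarith

lemma polya_szego {N : ℕ} (hN : 0 < N) (f G : EuclideanSpace ℝ (Fin N) → ℝ) (w : ℝ → ℝ) (p M r r0 B : ℝ) (hp : 1 < p)
    (hM : ∀ x, f x ≤ M) (hf : Continuous f) (hf0 : ∀ x, 0 ≤ f x) (hr : r0 < r) (hr0 : ∀ x, r0 ≤ ‖x‖ → f x = 0)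
    (hw : Continuous w) (hw0 : ∀ ρ, 0 ≤ w ρ) (hwM : ∀ ρ, w ρ ≤ M)
    (hvol : ∀ s, 0 ≤ s → ∃ R, 0 ≤ R ∧ {x : EuclideanSpace ℝ (Fin N) | s < w ‖x‖} = ball 0 R ∧
      volume {x | s < f x} = volume (ball (0 : EuclideanSpace ℝ (Fin N)) R))
    (hG : ∀ x, 0 ≤ G x) (hGB : ∀ x, G x ≤ B) (hGm : Measurable G)
    (hs : ∀ η > 0, ∃ h > 0, ∀ x y, ‖x - y‖ < h → f y ≤ f x + (G x + η) * ‖x - y‖) :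
    ∫⁻ x : EuclideanSpace ℝ (Fin N), ENNReal.ofReal (‖fderiv ℝ (fun x => w ‖x‖) x‖ ^ p) ≤
      ∫⁻ x in ball (0 : EuclideanSpace ℝ (Fin N)) r, ENNReal.ofReal (G x ^ p) := by
  set W : EuclideanSpace ℝ (Fin N) → ℝ := fun x => w ‖x‖ with hW
  obtain ⟨P, hpP⟩ : ∃ P, p.HolderConjugate P := ⟨_, Real.HolderConjugate.conjExponent hp⟩
  have hP1 : 1 < P := hpP.symm.lt
  have hB0 : 0 ≤ B := (hG 0).trans (hGB 0)
  have hWM : ∀ x, W x ≤ M := fun x => hwM _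
  have hWc : Continuous W := by fun_prop
  have hW0 : ∀ x, 0 ≤ W x := fun x => hw0 _
  have hfW : ∫⁻ x, ENNReal.ofReal (f x) = ∫⁻ x, ENNReal.ofReal (W x) := by
    rw [lintegral_eq_lintegral_meas_lt _ (.of_forall hf0) hf.measurable.aemeasurable,
     lintegral_eq_lintegral_meas_lt _ (.of_forall hW0) hWc.measurable.aemeasurable]
    refine setLIntegral_congr_fun measurableSet_Ioi fun s (hs : 0 < s) => ?_
    obtain ⟨R, hR, h1, h2⟩ := hvol s hs.le
    rw [h2, ← h1]
  have hffin : ∫⁻ x, ENNReal.ofReal (f x) ≠ ∞ := by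
    have : ∫⁻ x, ENNReal.ofReal (f x) ≤ ∫⁻ x in ball (0 : EuclideanSpace ℝ (Fin N)) r, ENNReal.ofReal M := by
      rw [← lintegral_indicator measurableSet_ball]
      apply lintegral_mono
      intro x
      by_cases hx : x ∈ ball (0 : EuclideanSpace ℝ (Fin N)) r
      · simp only [hx, indicator_of_mem]
        exact ENNReal.ofReal_le_ofReal (hM x)
      · have := hr0 x (by simp at hx; linarith)
        simp [this]
    refine ne_top_of_le_ne_top ?_ this
    rw [lintegral_const, Measure.restrict_apply_univ]
    exact ENNReal.mul_ne_top ENNReal.ofReal_ne_top measure_ball_lt_top.ne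
  have main : ∀ η > 0, ∫⁻ x, ENNReal.ofReal (‖fderiv ℝ W x‖ ^ p / p) ≤
      ∫⁻ x in ball (0 : EuclideanSpace ℝ (Fin N)) r, ENNReal.ofReal ((G x + η) ^ p / p) := by
    intro η hη
    obtain ⟨h, hh, hs1⟩ := hs η hη
    obtain ⟨t0, ht0, hup⟩ := hopf_upper f G p P M r r0 hpP hr hM hf0 hr0 hG η hη h hh hs1
    set I := ∫⁻ x in ball (0 : EuclideanSpace ℝ (Fin N)) r, ENNReal.ofReal ((G x + η) ^ p / p) with hI
    have step : ∀ t, 0 < t → t ≤ t0 → ∫⁻ x, ENNReal.ofReal ((hopf P t W x - W x) / t) ≤ I := by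
      intro t ht htt
      obtain ⟨hu1, hu2⟩ := hup t ht htt
      have hmW := hopf_meas W P t M hP1 ht hWM
      have hmf := hopf_meas f P t M hP1 ht hM
      have c1 : ∫⁻ x, ENNReal.ofReal (hopf P t W x) ≤ ∫⁻ x, ENNReal.ofReal (hopf P t f x) := by
        rw [lintegral_eq_lintegral_meas_lt _ (.of_forall fun x => (hW0 x).trans (self_le_hopf W P t M hP1 ht hWM x)) hmW.aemeasurable,
          lintegral_eq_lintegral_meas_lt _ (.of_forall fun x => (hf0 x).trans (self_le_hopf f P t M hP1 ht hM x)) hmf.aemeasurable]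
        refine setLIntegral_mono' measurableSet_Ioi fun s (hs : 0 < s) => ?_
        exact hopf_comp hN f w P t M hP1 ht hM hf hvol s hs.le
      have c2 : ∫⁻ x, ENNReal.ofReal (hopf P t f x) ≤ (∫⁻ x, ENNReal.ofReal (f x)) + ENNReal.ofReal t * I := by
        rw [hI, ← lintegral_const_mul' _ _ ENNReal.ofReal_ne_top, ← lintegral_indicator measurableSet_ball, ← lintegral_add_left (by have := hf.measurable; fun_prop)]
        apply lintegral_mono
        intro x
        by_cases hx : x ∈ ball (0 : EuclideanSpace ℝ (Fin N)) r
        · simp only [hx, indicator_of_mem]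
          rw [← ENNReal.ofReal_mul ht.le, ← ENNReal.ofReal_add (hf0 x)]
          · exact ENNReal.ofReal_le_ofReal (hu2 x)
          · have := hG x
            positivity
        · have := ENNReal.ofReal_of_nonpos (hu1 x (by simpa using hx))
          simp [this]
      have c3 : ∫⁻ x, ENNReal.ofReal (hopf P t W x) = (∫⁻ x, ENNReal.ofReal (W x)) + ENNReal.ofReal t * ∫⁻ x, ENNReal.ofReal ((hopf P t W x - W x) / t) := by
        rw [← lintegral_const_mul' _ _ ENNReal.ofReal_ne_top, ← lintegral_add_left (by have := hWc.measurable; fun_prop)]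
        congr 1; ext x
        have := self_le_hopf W P t M hP1 ht hWM x
        rw [← ENNReal.ofReal_mul ht.le, ← ENNReal.ofReal_add (hW0 x)]
        · congr 1; field_simp; ring
        · rw [mul_div_cancel₀ _ ht.ne']; linarith
      have c4 := c1.trans c2
      rw [c3, hfW, ENNReal.add_le_add_iff_left (hfW ▸ hffin)] at c4
      exact (ENNReal.mul_le_mul_iff_right (by simpa using ht) ENNReal.ofReal_ne_top).1 c4
    set u : ℕ → ℝ := fun n => 1 / ((n : ℝ) + 1) with hu
    have hu0 : ∀ n, 0 < u n := fun n => by positivity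
    have hu2 : Filter.Tendsto u Filter.atTop (nhds 0) := tendsto_one_div_add_atTop_nhds_zero_nat
    calc ∫⁻ x, ENNReal.ofReal (‖fderiv ℝ W x‖ ^ p / p) 
        ≤ ∫⁻ x, Filter.liminf (fun n => ENNReal.ofReal ((hopf P (u n) W x - W x) / u n)) Filter.atTop :=
          lintegral_mono fun x => hopf_lower W p P M hpP hWM x u hu0 hu2
      _ ≤ Filter.liminf (fun n => ∫⁻ x, ENNReal.ofReal ((hopf P (u n) W x - W x) / u n)) Filter.atTop := by
          apply lintegral_liminf_le
          intro n
          have hmW := hopf_meas W P (u n) M hP1 (hu0 n) hWM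
          have := hWc.measurable
          fun_prop
      _ ≤ I := by
          apply Filter.liminf_le_of_frequently_le'
          apply Filter.Eventually.frequently
          filter_upwards [hu2.eventually (gt_mem_nhds ht0)] with n hn
          exact step _ (hu0 n) hn.le
  have lim : Filter.Tendsto (fun n : ℕ => ∫⁻ x in ball (0 : EuclideanSpace ℝ (Fin N)) r, ENNReal.ofReal ((G x + 1 / ((n:ℝ) + 1)) ^ p / p)) Filter.atTop
      (nhds (∫⁻ x in ball (0 : EuclideanSpace ℝ (Fin N)) r, ENNReal.ofReal ((G x) ^ p / p))) := by
    apply tendsto_lintegral_of_dominated_convergence (fun _ => ENNReal.ofReal ((B + 1) ^ p / p))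
    · intro n; fun_prop
    · intro n
      refine .of_forall fun x => ?_
      apply ENNReal.ofReal_le_ofReal
      have h1 : 1 / ((n:ℝ) + 1) ≤ 1 := by
        rw [div_le_one (by positivity)]; linarith [(Nat.cast_nonneg n : (0:ℝ) ≤ n)]
      have := hG x
      have := hGB x
      gcongr
    · rw [lintegral_const, Measure.restrict_apply_univ]
      exact ENNReal.mul_ne_top ENNReal.ofReal_ne_top measure_ball_lt_top.ne
    · refine .of_forall fun x => ?_
      apply (ENNReal.continuous_ofReal.tendsto _).comp
      have h1 : Filter.Tendsto (fun n : ℕ => G x + 1 / ((n:ℝ) + 1)) Filter.atTop (nhds (G x + 0)) :=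
        tendsto_one_div_add_atTop_nhds_zero_nat.const_add _
      rw [add_zero] at h1
      exact (h1.rpow_const (Or.inr (by linarith))).div_const p
  have fin := ge_of_tendsto' lim fun n => main _ (by positivity)
  have sc : ∀ a : ℝ, ENNReal.ofReal (a / p) = ENNReal.ofReal p⁻¹ * ENNReal.ofReal a := by
    intro a
    rw [← ENNReal.ofReal_mul (by positivity)]
    congr 1; field_simp
  simp only [sc] at fin
  rw [lintegral_const_mul' _ _ ENNReal.ofReal_ne_top, lintegral_const_mul' _ _ ENNReal.ofReal_ne_top] at fin
  exact (ENNReal.mul_le_mul_iff_right (by simp; linarith) ENNReal.ofReal_ne_top).1 fin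

lemma sob_exp {N : ℕ} (hN : 2 ≤ N) (p Q : ℝ) (hp : 1 < p) (hQ : 1 < Q) (h : ltCritical N p Q) :
    ∃ P : ℝ, 1 ≤ P ∧ P ≤ p ∧ P < N ∧ P⁻¹ - (N : ℝ)⁻¹ ≤ Q⁻¹ := by
  have hN' : (2:ℝ) ≤ N := by exact_mod_cast hN
  by_cases hpN : p < N
  · refine ⟨p, hp.le, le_rfl, hpN, ?_⟩
    have := h hpN
    have h1 : p⁻¹ - (N:ℝ)⁻¹ = (N * p / (N - p))⁻¹ := by
      have : (N:ℝ) - p ≠ 0 := by linarith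
      field_simp
    rw [h1]
    exact inv_anti₀ (by linarith) this.le
  · push Not at hpN
    have hpos : 0 < (N:ℝ)⁻¹ + Q⁻¹ := by positivity
    have h2 : ((N:ℝ)⁻¹ + Q⁻¹)⁻¹ < N := by
      rw [inv_lt_comm₀ hpos (by linarith)]
      have : 0 < Q⁻¹ := by positivity
      linarith
    refine ⟨max 1 ((N:ℝ)⁻¹ + Q⁻¹)⁻¹, le_max_left _ _, max_le hp.le (by linarith), max_lt (by linarith) h2, ?_⟩
    have : (max 1 ((N:ℝ)⁻¹ + Q⁻¹)⁻¹)⁻¹ ≤ (((N:ℝ)⁻¹ + Q⁻¹)⁻¹)⁻¹ := inv_anti₀ (by positivity) (le_max_right _ _)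
    rw [inv_inv] at this
    linarith

lemma sobolev {N : ℕ} (hN : 2 ≤ N) (p Q : ℝ) (hp : 1 < p) (hQ : 1 < Q) (h : ltCritical N p Q) (r : ℝ) :
    ∃ C : ℝ, 0 < C ∧ ∀ v : EuclideanSpace ℝ (Fin N) → ℝ, ContDiff ℝ 1 v → HasCompactSupport v →
      tsupport v ⊆ ball 0 r → (∫ x, |v x| ^ Q) ^ (Q⁻¹) ≤ C * (∫ x, ‖fderiv ℝ v x‖ ^ p) ^ (p⁻¹) := by
  obtain ⟨P, hP1, hPp, hPN, hPQ⟩ := sob_exp hN p Q hp hQ h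
  set s := ball (0 : EuclideanSpace ℝ (Fin N)) r
  set P' : ℝ≥0 := ⟨P, by linarith⟩
  set Q' : ℝ≥0 := ⟨Q, by linarith⟩
  set p' : ℝ≥0 := ⟨p, by linarith⟩
  set K := eLpNormLESNormFDerivOfLeConst ℝ (volume : Measure (EuclideanSpace ℝ (Fin N))) s P' Q'
  set V := volume s ^ (1 / P - 1 / p) with hV
  have hVf : V ≠ ∞ := by
    rw [hV]
    apply ENNReal.rpow_ne_top_of_nonneg _ measure_ball_lt_top.ne
    rw [sub_nonneg]
    exact one_div_le_one_div_of_le (by linarith) hPp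
  refine ⟨K * V.toReal + 1, by positivity, fun v hv hc ht => ?_⟩
  have hDc : HasCompactSupport (fderiv ℝ v) := hc.fderiv ℝ
  have hDcont : Continuous (fderiv ℝ v) := hv.continuous_fderiv (by simp)
  have hDs : Function.support (fderiv ℝ v) ⊆ s := (support_fderiv_subset ℝ).trans ht
  have h1 : eLpNorm v Q' volume ≤ K * eLpNorm (fderiv ℝ v) P' volume :=
    eLpNorm_le_eLpNorm_fderiv_of_le volume hv ((subset_tsupport v).trans ht) (p := P') (q := Q') hP1 (by
      rw [finrank_euclideanSpace_fin]; exact_mod_cast hPN) (by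
      rw [finrank_euclideanSpace_fin]; exact hPQ) isBounded_ball
  have h2 : eLpNorm (fderiv ℝ v) P' volume ≤ eLpNorm (fderiv ℝ v) p' volume * V := by
    have h3 := eLpNorm_le_eLpNorm_mul_rpow_measure_univ (μ := volume.restrict s) (p := (P' : ℝ≥0∞)) (q := (p' : ℝ≥0∞))
      (by exact_mod_cast hPp) hDcont.aestronglyMeasurable
    have e1 : ∀ P : ℝ≥0∞, eLpNorm (fderiv ℝ v) P (volume.restrict s) = eLpNorm (fderiv ℝ v) P volume := fun P =>
      eLpNorm_restrict_eq_of_support_subset (ε := EuclideanSpace ℝ (Fin N) →L[ℝ] ℝ) (f := fderiv ℝ v) hDs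
    rw [e1, e1, Measure.restrict_apply_univ] at h3
    exact h3
  have m1 : MemLp v Q' volume := hv.continuous.memLp_of_hasCompactSupport hc
  have m2 : MemLp (fderiv ℝ v) p' volume := hDcont.memLp_of_hasCompactSupport hDc
  have hQ0 : (Q' : ℝ≥0∞) ≠ 0 := by
    have : Q' ≠ 0 := by intro h; have : Q = 0 := congrArg NNReal.toReal h; linarith
    exact_mod_cast this
  have hp0 : (p' : ℝ≥0∞) ≠ 0 := by
    have : p' ≠ 0 := by intro h; have : p = 0 := congrArg NNReal.toReal h; linarith
    exact_mod_cast this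
  rw [m2.eLpNorm_eq_integral_rpow_norm hp0 ENNReal.coe_ne_top] at h2
  rw [m1.eLpNorm_eq_integral_rpow_norm hQ0 ENNReal.coe_ne_top] at h1
  simp only [ENNReal.coe_toReal] at h1 h2
  have h4 := h1.trans (mul_le_mul_right h2 _)
  change ENNReal.ofReal ((∫ x, |v x| ^ Q) ^ (Q⁻¹)) ≤ K * (ENNReal.ofReal ((∫ x, ‖fderiv ℝ v x‖ ^ p) ^ (p⁻¹)) * V) at h4
  have i1 : 0 ≤ ∫ x, ‖fderiv ℝ v x‖ ^ p := integral_nonneg fun x => by positivity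
  have h5 := ENNReal.toReal_mono (ENNReal.mul_ne_top ENNReal.coe_ne_top (ENNReal.mul_ne_top ENNReal.ofReal_ne_top hVf)) h4
  rw [ENNReal.toReal_ofReal (by have : 0 ≤ ∫ x, |v x| ^ Q := integral_nonneg fun x => by positivity
                                positivity), ENNReal.toReal_mul, ENNReal.toReal_mul, ENNReal.toReal_ofReal (by positivity), ENNReal.coe_toReal] at h5
  have : 0 ≤ (∫ x, ‖fderiv ℝ v x‖ ^ p) ^ (p⁻¹) := by positivity
  nlinarith

/-- admissible functions for the Dirichlet problem on the centered ball -/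
def Adm {N : ℕ} (r : ℝ) (v : EuclideanSpace ℝ (Fin N) → ℝ) : Prop :=
  ContDiff ℝ (⊤ : ℕ∞) v ∧ HasCompactSupport v ∧ tsupport v ⊆ ball 0 r

lemma Adm.int_eq {N : ℕ} {r : ℝ} {v : EuclideanSpace ℝ (Fin N) → ℝ} (h : Adm r v) {q : ℝ} (hq : 0 < q) :
    ∫ x in ball 0 r, |v x| ^ q = ∫ x, |v x| ^ q := by
  apply setIntegral_eq_integral_of_forall_compl_eq_zero
  intro x hx
  rw [image_eq_zero_of_notMem_tsupport fun hh => hx (h.2.2 hh), abs_zero, zero_rpow hq.ne']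

lemma Adm.intD_eq {N : ℕ} {r : ℝ} {v : EuclideanSpace ℝ (Fin N) → ℝ} (h : Adm r v) {q : ℝ} (hq : 0 < q) :
    ∫ x in ball 0 r, ‖fderiv ℝ v x‖ ^ q = ∫ x, ‖fderiv ℝ v x‖ ^ q := by
  apply setIntegral_eq_integral_of_forall_compl_eq_zero
  intro x hx
  rw [image_eq_zero_of_notMem_tsupport fun hh => hx (h.2.2 (tsupport_fderiv_subset ℝ hh)), norm_zero, zero_rpow hq.ne']

lemma Adm.cont {N : ℕ} {r : ℝ} {v : EuclideanSpace ℝ (Fin N) → ℝ} (h : Adm r v) {q : ℝ} (hq : 0 < q) :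
    Continuous (fun x => |v x| ^ q) :=
  h.1.continuous.abs.rpow_const fun _ => Or.inr hq.le

lemma Adm.contD {N : ℕ} {r : ℝ} {v : EuclideanSpace ℝ (Fin N) → ℝ} (h : Adm r v) : Continuous (fderiv ℝ v) :=
  h.1.continuous_fderiv (by simp)

lemma Adm.integ {N : ℕ} {r : ℝ} {v : EuclideanSpace ℝ (Fin N) → ℝ} (h : Adm r v) {q : ℝ} (hq : 0 < q) :
    Integrable (fun x => |v x| ^ q) := by
  apply (h.cont hq).integrable_of_hasCompactSupport
  exact h.2.1.comp_left (g := fun z : ℝ => |z| ^ q) (by simp [zero_rpow hq.ne'])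

lemma Adm.integD {N : ℕ} {r : ℝ} {v : EuclideanSpace ℝ (Fin N) → ℝ} (h : Adm r v) {q : ℝ} (hq : 0 < q) :
    Integrable (fun x => ‖fderiv ℝ v x‖ ^ q) := by
  apply (h.contD.norm.rpow_const fun _ => Or.inr hq.le).integrable_of_hasCompactSupport
  exact (h.2.1.fderiv ℝ).comp_left (g := fun z : EuclideanSpace ℝ (Fin N) →L[ℝ] ℝ => ‖z‖ ^ q) (by simp [zero_rpow hq.ne'])

lemma Adm.pos {N : ℕ} {r : ℝ} {v : EuclideanSpace ℝ (Fin N) → ℝ} (h : Adm r v) {q : ℝ} (hq : 0 < q) (hx : ∃ x, v x ≠ 0) :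
    0 < ∫ x, |v x| ^ q := by
  rw [integral_pos_iff_support_of_nonneg (fun x => by positivity) (h.integ hq)]
  refine ((h.cont hq).isOpen_support).measure_pos volume ?_
  obtain ⟨x, hx⟩ := hx
  exact ⟨x, by simp only [Function.mem_support]; positivity⟩

lemma lam_bdd {N : ℕ} (p q : ℝ) (Ω : Set (EuclideanSpace ℝ (Fin N))) : ∀ R ∈ { R : ℝ | ∃ v : EuclideanSpace ℝ (Fin N) → ℝ,
    ContDiff ℝ (⊤ : ℕ∞) v ∧ HasCompactSupport v ∧ tsupport v ⊆ Ω ∧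
    (∃ x ∈ Ω, v x ≠ 0) ∧ R = rayleighQuot p q Ω v }, 0 ≤ R := by
  rintro R ⟨v, -, -, -, -, rfl⟩
  unfold rayleighQuot
  exact div_nonneg (integral_nonneg fun x => by positivity) (rpow_nonneg (integral_nonneg fun x => by positivity) _)

lemma lam_le {N : ℕ} (p q r : ℝ) (hp : 1 < p) (hq : 1 < q) {v : EuclideanSpace ℝ (Fin N) → ℝ} (h : Adm r v) :
    lambdaPQ p q (ball (0 : EuclideanSpace ℝ (Fin N)) r) * (∫ x, |v x| ^ q) ^ (p / q) ≤ ∫ x, ‖fderiv ℝ v x‖ ^ p := by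
  by_cases hx : ∃ x, v x ≠ 0
  · have hpos := h.pos (q := q) (by linarith) hx
    rw [← le_div_iff₀ (by positivity)]
    unfold lambdaPQ
    apply csInf_le ⟨0, lam_bdd p q _⟩
    obtain ⟨x, hx⟩ := hx
    refine ⟨v, h.1, h.2.1, h.2.2, ⟨x, h.2.2 (subset_tsupport v hx), hx⟩, ?_⟩
    unfold rayleighQuot
    rw [h.int_eq (by linarith), h.intD_eq (by linarith)]
  · push Not at hx
    have : v = 0 := funext hx
    have hq0 : q ≠ 0 := by linarith
    have hp0 : p ≠ 0 := by linarith
    subst this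
    simp [zero_rpow hq0, zero_rpow hp0, zero_rpow (div_ne_zero hp0 hq0)]

lemma lam_ne {N : ℕ} (p q r : ℝ) (hr : 0 < r) : { R : ℝ | ∃ v : EuclideanSpace ℝ (Fin N) → ℝ,
    ContDiff ℝ (⊤ : ℕ∞) v ∧ HasCompactSupport v ∧ tsupport v ⊆ (ball 0 r) ∧
    (∃ x ∈ (ball 0 r), v x ≠ 0) ∧ R = rayleighQuot p q (ball 0 r) v }.Nonempty := by
  obtain ⟨f, hf1, hf2, hf3, hf4, hf5⟩ := exists_contDiff_tsupport_subset (n := (⊤ : ℕ∞)) (s := ball (0 : EuclideanSpace ℝ (Fin N)) r) (x := 0) (ball_mem_nhds 0 hr)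
  exact ⟨_, f, hf3, hf2, hf1, ⟨0, mem_ball_self hr, by rw [hf5]; simp⟩, rfl⟩

lemma near_min {N : ℕ} (p q r : ℝ) (hp : 1 < p) (hq : 1 < q) (hr : 0 < r) (ε : ℝ) (hε : 0 < ε) :
    ∃ v : EuclideanSpace ℝ (Fin N) → ℝ, Adm r v ∧ ∫ x, |v x| ^ q = 1 ∧
      ∫ x, ‖fderiv ℝ v x‖ ^ p < lambdaPQ p q (ball (0 : EuclideanSpace ℝ (Fin N)) r) + ε := by
  obtain ⟨R, ⟨v, h1, h2, h3, ⟨x, hx, hx'⟩, rfl⟩, hR⟩ := exists_lt_of_csInf_lt (lam_ne (N := N) p q r hr) (lt_add_of_pos_right _ hε)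
  have hA : Adm r v := ⟨h1, h2, h3⟩
  unfold rayleighQuot at hR
  rw [hA.int_eq (by linarith), hA.intD_eq (by linarith)] at hR
  have hpos := hA.pos (q := q) (by linarith) ⟨x, hx'⟩
  set I := ∫ x, |v x| ^ q
  set k := I ^ (-q⁻¹) with hk
  have hk0 : 0 < k := by positivity
  refine ⟨fun x => k * v x, ⟨contDiff_const.mul h1, h2.mul_left, (tsupport_mul_subset_right (f := fun _ => k) (g := v)).trans h3⟩, ?_, ?_⟩
  · simp only [abs_mul, abs_of_pos hk0]
    simp_rw [mul_rpow hk0.le (abs_nonneg _)]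
    rw [integral_const_mul, hk, ← rpow_mul hpos.le, neg_mul, inv_mul_cancel₀ (by linarith), rpow_neg_one, inv_mul_cancel₀ hpos.ne']
  · have : ∀ x, ‖fderiv ℝ (fun x => k * v x) x‖ ^ p = k ^ p * ‖fderiv ℝ v x‖ ^ p := by
      intro x
      rw [fderiv_const_mul (h1.differentiable (by simp) x), norm_smul, norm_of_nonneg hk0.le, mul_rpow hk0.le (norm_nonneg _)]
    simp_rw [this]
    rw [integral_const_mul]
    refine lt_of_eq_of_lt ?_ hR
    rw [hk, ← rpow_mul hpos.le, div_eq_inv_mul, ← rpow_neg hpos.le]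
    congr 2; ring

lemma lam_pos {N : ℕ} (hN : 2 ≤ N) (p q r : ℝ) (hp : 1 < p) (hq : 1 < q) (hc : ltCritical N p q) (hr : 0 < r) :
    0 < lambdaPQ p q (ball (0 : EuclideanSpace ℝ (Fin N)) r) := by
  obtain ⟨C, hC, hS⟩ := sobolev hN p q hp hq hc r
  have : (C⁻¹) ^ p ≤ lambdaPQ p q (ball (0 : EuclideanSpace ℝ (Fin N)) r) := by
    apply le_of_forall_pos_le_add
    intro ε hε
    obtain ⟨v, hA, h1, h2⟩ := near_min (N := N) p q r hp hq hr ε hε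
    have h3 := hS v (hA.1.of_le (by simp)) hA.2.1 hA.2.2
    rw [h1, one_rpow] at h3
    set I := ∫ x, ‖fderiv ℝ v x‖ ^ p
    have hI : 0 ≤ I := integral_nonneg fun x => by positivity
    have h4 : C⁻¹ ≤ I ^ p⁻¹ := by rwa [inv_le_iff_one_le_mul₀' hC]
    have h5 : (C⁻¹) ^ p ≤ (I ^ p⁻¹) ^ p := rpow_le_rpow (by positivity) h4 (by linarith)
    rw [← rpow_mul hI, inv_mul_cancel₀ (by linarith), rpow_one] at h5
    linarith
  exact lt_of_lt_of_le (by positivity) this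

lemma lam_trans {N : ℕ} (p q r : ℝ) (hr : 0 < r) (hp : 1 < p) (hq : 1 < q) (c : EuclideanSpace ℝ (Fin N)) :
    lambdaPQ p q (ball (0 : EuclideanSpace ℝ (Fin N)) r) ≤ lambdaPQ p q (ball c r) := by
  conv_rhs => unfold lambdaPQ
  apply le_csInf
  · obtain ⟨f, hf1, hf2, hf3, hf4, hf5⟩ := exists_contDiff_tsupport_subset (n := (⊤ : ℕ∞)) (s := ball c r) (x := c) (ball_mem_nhds c hr)
    exact ⟨_, f, hf3, hf2, hf1, ⟨c, mem_ball_self hr, by rw [hf5]; simp⟩, rfl⟩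
  · rintro R ⟨v, h1, h2, h3, ⟨x, hx, hx'⟩, rfl⟩
    have hA : Adm r (fun x => v (x + c)) := by
      refine ⟨h1.comp (contDiff_id.add contDiff_const), h2.comp_homeomorph (Homeomorph.addRight c), ?_⟩
      have : tsupport (fun x => v (x + c)) = (Homeomorph.addRight c) ⁻¹' tsupport v :=
        tsupport_comp_eq_preimage v (Homeomorph.addRight c)
      rw [this]
      intro y hy
      have := h3 hy
      simpa [dist_eq_norm] using this
    have hpos := hA.pos (q := q) (by linarith) ⟨x - c, by simpa using hx'⟩
    have h4 := lam_le p q r hp hq hA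
    rw [← le_div_iff₀ (by positivity)] at h4
    refine h4.trans (le_of_eq ?_)
    unfold rayleighQuot
    have e1 : ∫ x in ball c r, |v x| ^ q = ∫ x, |v x| ^ q := by
      apply setIntegral_eq_integral_of_forall_compl_eq_zero
      intro x hx
      rw [image_eq_zero_of_notMem_tsupport fun hh => hx (h3 hh), abs_zero, zero_rpow (by linarith)]
    have e2 : ∫ x in ball c r, ‖fderiv ℝ v x‖ ^ p = ∫ x, ‖fderiv ℝ v x‖ ^ p := by
      apply setIntegral_eq_integral_of_forall_compl_eq_zero
      intro x hx
      rw [image_eq_zero_of_notMem_tsupport fun hh => hx (h3 (tsupport_fderiv_subset ℝ hh)), norm_zero, zero_rpow (by linarith)]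
    rw [e1, e2]
    simp only [fderiv_comp_add_right]
    rw [integral_add_right_eq_self (fun x => ‖fderiv ℝ v x‖ ^ p), integral_add_right_eq_self (fun x => |v x| ^ q)]

lemma lam_nonneg {N : ℕ} (p q : ℝ) (Ω : Set (EuclideanSpace ℝ (Fin N))) : 0 ≤ lambdaPQ p q Ω :=
  Real.sInf_nonneg (lam_bdd p q Ω)

lemma trunc_smooth (χ : ℝ → ℝ) (hχ : ContDiff ℝ (⊤ : ℕ∞) χ) (a : ℝ) (ha : 0 ≤ a)
    (h0 : ∀ z, |z| ≤ a → χ z = 0) : ∃ Ψ : ℝ → ℝ, ContDiff ℝ (⊤ : ℕ∞) Ψ ∧ (∀ y, HasDerivAt Ψ (1 - χ y) y) ∧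
      ∀ y, |y| ≤ a → Ψ y = y := by
  have hc : Continuous fun z => 1 - χ z := continuous_const.sub hχ.continuous
  have hd : ∀ y, HasDerivAt (fun y => ∫ z in (0:ℝ)..y, (1 - χ z)) (1 - χ y) y := fun y =>
    intervalIntegral.integral_hasDerivAt_right (hc.intervalIntegrable _ _) hc.stronglyMeasurable.stronglyMeasurableAtFilter hc.continuousAt
  refine ⟨fun y => ∫ z in (0:ℝ)..y, (1 - χ z), ?_, hd, ?_⟩
  · rw [contDiff_infty_iff_deriv]
    refine ⟨fun y => (hd y).differentiableAt, ?_⟩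
    have : deriv (fun y => ∫ z in (0:ℝ)..y, (1 - χ z)) = fun z => 1 - χ z := funext fun y => (hd y).deriv
    rw [this]
    exact contDiff_const.sub hχ
  · intro y hy
    have : ∫ z in (0:ℝ)..y, (1 - χ z) = ∫ z in (0:ℝ)..y, (1:ℝ) := by
      apply intervalIntegral.integral_congr
      intro z hz
      have : |z| ≤ a := by
        rw [abs_le] at hy ⊢
        rw [uIcc, mem_Icc] at hz
        have h1 : -a ≤ 0 ⊓ y := le_inf (by linarith) hy.1
        have h2 : 0 ⊔ y ≤ a := sup_le ha hy.2
        exact ⟨h1.trans hz.1, hz.2.trans h2⟩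
      simp [h0 z this]
    simp [this]

lemma first_var {N : ℕ} (p q r : ℝ) (hp : 1 < p) (hpq : p < q) (v : EuclideanSpace ℝ (Fin N) → ℝ) (hA : Adm r v)
    (h1 : ∫ x, |v x| ^ q = 1) (ε : ℝ)
    (h2 : ∫ x, ‖fderiv ℝ v x‖ ^ p < lambdaPQ p q (ball (0 : EuclideanSpace ℝ (Fin N)) r) + ε)
    (χ : ℝ → ℝ) (hχ : ContDiff ℝ (⊤ : ℕ∞) χ) (a : ℝ) (ha : 0 ≤ a)
    (h0 : ∀ z, |z| ≤ a → χ z = 0) (hχ0 : ∀ z, 0 ≤ χ z) (hχ1 : ∀ z, χ z ≤ 1) :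
    ∫ x, ‖fderiv ℝ v x‖ ^ p * χ (v x) ≤
      lambdaPQ p q (ball (0 : EuclideanSpace ℝ (Fin N)) r) * (∫ x in {x | a < |v x|}, |v x| ^ q) + ε := by
  obtain ⟨Ψ, hΨ, hd, hΨe⟩ := trunc_smooth χ hχ a ha h0
  have hΨ0 : Ψ 0 = 0 := hΨe 0 (by simpa using ha)
  set l := lambdaPQ p q (ball (0 : EuclideanSpace ℝ (Fin N)) r)
  have hl : 0 ≤ l := lam_nonneg _ _ _
  have hB : Adm r (Ψ ∘ v) := by
    refine ⟨hΨ.comp hA.1, hA.2.1.comp_left hΨ0, ?_⟩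
    refine (closure_mono ?_).trans hA.2.2
    exact Function.support_comp_subset hΨ0 v
  have h3 := lam_le p q r hp (hp.trans hpq) hB
  have hms : MeasurableSet {x | a < |v x|} := measurableSet_lt measurable_const hA.1.continuous.abs.measurable
  set J := ∫ x in {x | a < |v x|}, |v x| ^ q with hJ
  have hint := hA.integ (q := q) (by linarith)
  have hJ1 : J + ∫ x in {x | a < |v x|}ᶜ, |v x| ^ q = 1 := by rw [hJ, integral_add_compl hms hint, h1]
  have h4 : ∫ x in {x | a < |v x|}ᶜ, |v x| ^ q ≤ ∫ x, |(Ψ ∘ v) x| ^ q := by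
    rw [← integral_indicator hms.compl]
    refine integral_mono (hint.indicator hms.compl) (hB.integ (by linarith)) fun x => ?_
    by_cases hx : a < |v x|
    · simp only [indicator, mem_compl_iff, mem_ofPred_eq, hx, not_true, if_false]; positivity
    · simp only [indicator, mem_compl_iff, mem_ofPred_eq, hx, not_false_iff, if_true, Function.comp]
      rw [hΨe _ (not_lt.1 hx)]
  have hJ0 : 0 ≤ J := integral_nonneg fun x => by positivity
  have hJ2 : 0 ≤ 1 - J := by
    have : 0 ≤ ∫ x in {x | a < |v x|}ᶜ, |v x| ^ q := integral_nonneg fun x => by positivity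
    linarith
  have h5 : 1 - J ≤ (∫ x, |(Ψ ∘ v) x| ^ q) ^ (p / q) := by
    have e1 : 1 - J ≤ (1 - J) ^ (p / q) := by
      rcases hJ2.eq_or_lt with h | h
      · rw [← h]; positivity
      · exact self_le_rpow_of_le_one hJ2 (by linarith) ((div_lt_one (by linarith)).2 hpq).le
    exact e1.trans (rpow_le_rpow hJ2 (by linarith) (by have : 0 < q := by linarith
                                                       positivity))
  have hDint := hA.integD (q := p) (by linarith)
  have hχv : Continuous fun x => χ (v x) := hχ.continuous.comp hA.1.continuous
  have hDint2 : Integrable fun x => ‖fderiv ℝ v x‖ ^ p * χ (v x) := by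
    refine hDint.mono' ((hA.contD.norm.rpow_const fun _ => Or.inr (by linarith)).mul hχv).aestronglyMeasurable (.of_forall fun x => ?_)
    rw [norm_mul, norm_of_nonneg (hχ0 _), norm_of_nonneg (by positivity)]
    exact mul_le_of_le_one_right (by positivity) (hχ1 _)
  have h6 : ∫ x, ‖fderiv ℝ (Ψ ∘ v) x‖ ^ p ≤ (∫ x, ‖fderiv ℝ v x‖ ^ p) - ∫ x, ‖fderiv ℝ v x‖ ^ p * χ (v x) := by
    rw [← integral_sub hDint hDint2]
    refine integral_mono (hB.integD (by linarith)) (hDint.sub hDint2) fun x => ?_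
    have e1 : HasFDerivAt (Ψ ∘ v) ((1 - χ (v x)) • fderiv ℝ v x) x :=
      (hd (v x)).comp_hasFDerivAt x (hA.1.differentiable (by simp) x).hasFDerivAt
    have e2 : 0 ≤ 1 - χ (v x) := by linarith [hχ1 (v x)]
    simp only
    rw [e1.fderiv, norm_smul, norm_of_nonneg e2, mul_rpow e2 (norm_nonneg _)]
    have e3 : (1 - χ (v x)) ^ p ≤ 1 - χ (v x) := by
      rcases e2.eq_or_lt with h | h
      · rw [← h, zero_rpow (by linarith)]
      · conv_rhs => rw [← rpow_one (1 - χ (v x))]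
        exact rpow_le_rpow_of_exponent_ge h (by linarith [hχ0 (v x)]) hp.le
    have e4 : 0 ≤ ‖fderiv ℝ v x‖ ^ p := by positivity
    nlinarith
  have h7 := mul_le_mul_of_nonneg_left h5 hl
  nlinarith

lemma equimeas {N : ℕ} (f g : EuclideanSpace ℝ (Fin N) → ℝ) (hf : Measurable f) (hg : Measurable g)
    (h : ∀ t, 0 ≤ t → volume {x | t < f x} = volume {x | t < g x}) (q : ℝ) (hq : 0 < q) (s : ℝ) (hs : 0 ≤ s) :
    ∫⁻ x in {x | s < f x}, ENNReal.ofReal (f x ^ q) = ∫⁻ x in {x | s < g x}, ENNReal.ofReal (g x ^ q) := by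
  have key : ∀ f : EuclideanSpace ℝ (Fin N) → ℝ, Measurable f → ∫⁻ x in {x | s < f x}, ENNReal.ofReal (f x ^ q)
      = ∫⁻ t in Ioi (0:ℝ), volume {x | max s (t ^ q⁻¹) < f x} := by
    intro f hf
    have hm : MeasurableSet {x | s < f x} := measurableSet_lt measurable_const hf
    rw [← lintegral_indicator hm]
    have e1 : ∀ x, {x | s < f x}.indicator (fun x => ENNReal.ofReal (f x ^ q)) x = ENNReal.ofReal ({x | s < f x}.indicator (fun x => f x ^ q) x) := by
      intro x
      by_cases hx : x ∈ {x | s < f x} <;> simp [hx]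
    simp_rw [e1]
    rw [lintegral_eq_lintegral_meas_lt]
    · refine setLIntegral_congr_fun measurableSet_Ioi fun t (ht : 0 < t) => ?_
      congr 1
      ext x
      simp only [mem_ofPred_eq, indicator, max_lt_iff]
      by_cases hx : s < f x
      · simp only [hx, if_true, true_and]
        rw [rpow_inv_lt_iff_of_pos ht.le (by linarith) hq]
      · simp [hx, ht.le]
    · refine .of_forall fun x => ?_
      apply indicator_nonneg
      intro x hx
      exact rpow_nonneg (by have : s < f x := hx
                            linarith) _
    · exact ((hf.pow_const q).indicator hm).aemeasurable
  rw [key f hf, key g hg]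
  refine setLIntegral_congr_fun measurableSet_Ioi fun t (ht : 0 < t) => ?_
  exact h _ (hs.trans (le_max_left _ _))

lemma Adm.lip {N : ℕ} {r : ℝ} {v : EuclideanSpace ℝ (Fin N) → ℝ} (h : Adm r v) : ∃ K, LipschitzWith K v :=
  (h.1.of_le (by simp : (1 : WithTop ℕ∞) ≤ _)).lipschitzWith_of_hasCompactSupport h.2.1 (by simp)

lemma chi_ex (s m : ℝ) (hs : 0 ≤ s) (hm : s < m) : ∃ χ : ℝ → ℝ, ContDiff ℝ (⊤ : ℕ∞) χ ∧
    (∀ z, |z| ≤ s → χ z = 0) ∧ (∀ z, m ≤ |z| → χ z = 1) ∧ (∀ z, 0 ≤ χ z) ∧ (∀ z, χ z ≤ 1) := by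
  have hd : 0 < m ^ 2 - s ^ 2 := by nlinarith
  refine ⟨fun z => Real.smoothTransition ((z ^ 2 - s ^ 2) / (m ^ 2 - s ^ 2)), ?_, ?_, ?_, ?_, ?_⟩
  · exact Real.smoothTransition.contDiff.comp (((contDiff_id.pow 2).sub contDiff_const).div_const _)
  · intro z hz
    apply Real.smoothTransition.zero_of_nonpos
    apply div_nonpos_of_nonpos_of_nonneg _ hd.le
    nlinarith [sq_abs z, abs_nonneg z]
  · intro z hz
    apply Real.smoothTransition.one_of_one_le
    rw [one_le_div hd]
    nlinarith [sq_abs z, abs_nonneg z]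
  · intro z; exact Real.smoothTransition.nonneg _
  · intro z; exact Real.smoothTransition.le_one _

lemma slope_est {N : ℕ} {r : ℝ} {v : EuclideanSpace ℝ (Fin N) → ℝ} (hA : Adm r v) (m s' : ℝ) (hm : m < s')
    (χ : ℝ → ℝ) (h1 : ∀ z, m ≤ |z| → χ z = 1) (h0 : ∀ z, 0 ≤ χ z) :
    ∀ η > 0, ∃ h > 0, ∀ x y, ‖x - y‖ < h → max (|v y| - s') 0 ≤ max (|v x| - s') 0 + (‖fderiv ℝ v x‖ * χ (v x) + η) * ‖x - y‖ := by
  intro η hη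
  obtain ⟨K, hK⟩ := hA.lip
  have huc : UniformContinuous (fderiv ℝ v) := by
    obtain ⟨L, hL⟩ := (hA.1.fderiv_right (m := 1) (WithTop.coe_le_coe.2 (le_top : (1 + 1 : ℕ∞) ≤ ⊤))).lipschitzWith_of_hasCompactSupport (hA.2.1.fderiv ℝ) (by simp)
    exact hL.uniformContinuous
  obtain ⟨h1', hh1, huc⟩ := Metric.uniformContinuous_iff.1 huc η hη
  refine ⟨min h1' ((s' - m) / (K + 1)), lt_min hh1 (div_pos (by linarith) (by positivity)), fun x y hxy => ?_⟩
  by_cases hx : m ≤ |v x|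
  · rw [h1 _ hx, mul_one]
    have hmv : ‖v y - v x‖ ≤ (‖fderiv ℝ v x‖ + η) * ‖y - x‖ := by
      refine (convex_ball x h1').norm_image_sub_le_of_norm_fderiv_le (𝕜 := ℝ) (fun z _ => hA.1.differentiable (by simp) z) (fun z hz => ?_) (mem_ball_self hh1) ?_
      · have := huc (show dist z x < h1' from hz)
        rw [dist_eq_norm] at this
        have h3 : ‖fderiv ℝ v z‖ ≤ ‖fderiv ℝ v x‖ + ‖fderiv ℝ v z - fderiv ℝ v x‖ := by
          have := norm_add_le (fderiv ℝ v x) (fderiv ℝ v z - fderiv ℝ v x)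
          simpa using this
        linarith
      · rw [mem_ball, dist_eq_norm, norm_sub_rev]; exact lt_of_lt_of_le hxy (min_le_left _ _)
    rw [norm_sub_rev y x] at hmv
    have h4 : |v y| ≤ |v x| + ‖v y - v x‖ := by
      have := abs_add_le (v x) (v y - v x)
      simpa using this
    have h5 : 0 ≤ (‖fderiv ℝ v x‖ + η) * ‖x - y‖ := by positivity
    apply max_le
    · have := le_max_left (|v x| - s') 0; linarith
    · have := le_max_right (|v x| - s') 0; linarith
  · have h4 : |v y| ≤ |v x| + ‖v y - v x‖ := by
      have := abs_add_le (v x) (v y - v x)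
      simpa using this
    have h5 : ‖v y - v x‖ ≤ K * ‖y - x‖ := by simpa [dist_eq_norm] using hK.dist_le_mul y x
    rw [norm_sub_rev y x] at h5
    have h6 := lt_of_lt_of_le hxy (min_le_right _ _)
    rw [lt_div_iff₀ (by positivity)] at h6
    have h7 : |v y| - s' ≤ 0 := by nlinarith [norm_nonneg (x - y), K.2]
    rw [max_eq_right h7]
    have := h0 (v x)
    positivity

/-- level-set gradient estimate for the rearrangement of a near-minimizer -/
lemma level_est {N : ℕ} (hN : 0 < N) (p q r : ℝ) (hp : 1 < p) (hpq : p < q) (v : EuclideanSpace ℝ (Fin N) → ℝ) (hA : Adm r v)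
    (h1 : ∫ x, |v x| ^ q = 1) (ε : ℝ)
    (h2 : ∫ x, ‖fderiv ℝ v x‖ ^ p < lambdaPQ p q (ball (0 : EuclideanSpace ℝ (Fin N)) r) + ε) (hε : 0 < ε)
    (s : ℝ) (hs : 0 ≤ s) (w : ℝ → ℝ) (M : ℝ) (hM : ∀ x, |v x| ≤ M) (hw : Continuous w) (hwM : ∀ ρ, w ρ ≤ M)
    (hvol : ∀ s, 0 ≤ s → ∃ R, 0 ≤ R ∧ {x : EuclideanSpace ℝ (Fin N) | s < w ‖x‖} = ball 0 R ∧
      volume {x | s < |v x|} = volume (ball (0 : EuclideanSpace ℝ (Fin N)) R)) :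
    ∫⁻ x in {x : EuclideanSpace ℝ (Fin N) | s < w ‖x‖}, ENNReal.ofReal (‖fderiv ℝ (fun x => w ‖x‖) x‖ ^ p) ≤
      ENNReal.ofReal (lambdaPQ p q (ball (0 : EuclideanSpace ℝ (Fin N)) r)) *
        (∫⁻ x in {x : EuclideanSpace ℝ (Fin N) | s < w ‖x‖}, ENNReal.ofReal (w ‖x‖ ^ q)) + ENNReal.ofReal ε := by
  set l := lambdaPQ p q (ball (0 : EuclideanSpace ℝ (Fin N)) r)
  have hl : 0 ≤ l := lam_nonneg _ _ _
  set W : EuclideanSpace ℝ (Fin N) → ℝ := fun x => w ‖x‖ with hW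
  have hWc : Continuous W := by fun_prop
  obtain ⟨r0, hr0, hsub⟩ := exists_lt_subset_ball (isClosed_tsupport v) hA.2.2
  obtain ⟨K, hK⟩ := hA.lip
  have hvc := hA.1.continuous
  have hDint := hA.integD (q := p) (by linarith)
  have equi := equimeas (fun x => |v x|) W hvc.abs.measurable hWc.measurable (fun t ht => by
    obtain ⟨R, hR, e1, e2⟩ := hvol t ht
    rw [e2, ← e1]) q (by linarith) s hs
  have main : ∀ s', s < s' → ∫⁻ x in {x : EuclideanSpace ℝ (Fin N) | s' < W x}, ENNReal.ofReal (‖fderiv ℝ W x‖ ^ p) ≤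
      ENNReal.ofReal l * (∫⁻ x in {x : EuclideanSpace ℝ (Fin N) | s < W x}, ENNReal.ofReal (W x ^ q)) + ENNReal.ofReal ε := by
    intro s' hs'
    obtain ⟨χ, hχ, hχs, hχm, hχ0, hχ1⟩ := chi_ex s ((s + s') / 2) hs (by linarith)
    have fv := first_var p q r hp hpq v hA h1 ε h2 χ hχ s hs hχs hχ0 hχ1
    have hχv : Continuous fun x => χ (v x) := hχ.continuous.comp hvc
    have hDint2 : Integrable fun x => ‖fderiv ℝ v x‖ ^ p * χ (v x) := by
      refine hDint.mono' ((hA.contD.norm.rpow_const fun _ => Or.inr (by linarith)).mul hχv).aestronglyMeasurable (.of_forall fun x => ?_)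
      rw [norm_mul, norm_of_nonneg (hχ0 _), norm_of_nonneg (by positivity)]
      exact mul_le_of_le_one_right (by positivity) (hχ1 _)
    have ps := polya_szego hN (fun x => max (|v x| - s') 0) (fun x => ‖fderiv ℝ v x‖ * χ (v x)) (fun ρ => max (w ρ - s') 0) p (max (M - s') 0) r r0 K hp
      (fun x => max_le_max_right _ (by linarith [hM x])) (by fun_prop) (fun x => le_max_right _ _) hr0 (fun x hx => by
        have : v x = 0 := image_eq_zero_of_notMem_tsupport fun hh => by
          have := hsub hh
          simp at this; linarith
        simp only [this, abs_zero]
        exact max_eq_right (by linarith)) (by fun_prop) (fun ρ => le_max_right _ _) (fun ρ => max_le_max_right _ (by linarith [hwM ρ]))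
      (fun τ hτ => by
        obtain ⟨R, hR, e1, e2⟩ := hvol (τ + s') (by linarith)
        refine ⟨R, hR, ?_, ?_⟩
        · rw [← e1]; ext x
          simp only [mem_ofPred_eq, lt_max_iff]
          constructor
          · rintro (h | h) <;> linarith
          · intro h; left; linarith
        · rw [← e2]; congr 1; ext x
          simp only [mem_ofPred_eq, lt_max_iff]
          constructor
          · rintro (h | h) <;> linarith
          · intro h; left; linarith)
      (fun x => mul_nonneg (norm_nonneg _) (hχ0 _)) (fun x => by
        have := norm_fderiv_le_of_lipschitz ℝ hK (x₀ := x)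
        have := mul_le_of_le_one_right (norm_nonneg (fderiv ℝ v x)) (hχ1 (v x))
        linarith) (hA.contD.norm.mul hχv).measurable (slope_est hA ((s + s') / 2) s' (by linarith) χ hχm hχ0)
    calc ∫⁻ x in {x : EuclideanSpace ℝ (Fin N) | s' < W x}, ENNReal.ofReal (‖fderiv ℝ W x‖ ^ p)
        = ∫⁻ x in {x : EuclideanSpace ℝ (Fin N) | s' < W x}, ENNReal.ofReal (‖fderiv ℝ (fun x : EuclideanSpace ℝ (Fin N) => max (w ‖x‖ - s') 0) x‖ ^ p) := by
          refine setLIntegral_congr_fun (measurableSet_lt measurable_const hWc.measurable) fun x hx => ?_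
          have hx' : s' < W x := hx
          have : fderiv ℝ (fun x : EuclideanSpace ℝ (Fin N) => max (w ‖x‖ - s') 0) x = fderiv ℝ W x := by
            have e : (fun x : EuclideanSpace ℝ (Fin N) => max (w ‖x‖ - s') 0) =ᶠ[nhds x] fun y => W y - s' := by
              filter_upwards [hWc.continuousAt.eventually (lt_mem_nhds hx')] with y hy
              exact max_eq_left (by linarith)
            rw [e.fderiv_eq, fderiv_sub_const]
          simp only [this]
      _ ≤ ∫⁻ x, ENNReal.ofReal (‖fderiv ℝ (fun x : EuclideanSpace ℝ (Fin N) => max (w ‖x‖ - s') 0) x‖ ^ p) := setLIntegral_le_lintegral _ _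
      _ ≤ _ := ps
      _ ≤ ∫⁻ x, ENNReal.ofReal ((‖fderiv ℝ v x‖ * χ (v x)) ^ p) := setLIntegral_le_lintegral _ _
      _ ≤ ∫⁻ x, ENNReal.ofReal (‖fderiv ℝ v x‖ ^ p * χ (v x)) := by
          refine lintegral_mono fun x => ENNReal.ofReal_le_ofReal ?_
          rw [mul_rpow (norm_nonneg _) (hχ0 _)]
          gcongr
          conv_rhs => rw [← rpow_one (χ (v x))]
          rcases (hχ0 (v x)).eq_or_lt with h | h
          · rw [← h, zero_rpow (by linarith), zero_rpow one_ne_zero]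
          · exact rpow_le_rpow_of_exponent_ge h (hχ1 _) hp.le
      _ = ENNReal.ofReal (∫ x, ‖fderiv ℝ v x‖ ^ p * χ (v x)) := by
          rw [ofReal_integral_eq_lintegral_ofReal hDint2 (.of_forall fun x => mul_nonneg (by positivity) (hχ0 _))]
      _ ≤ ENNReal.ofReal (l * (∫ x in {x | s < |v x|}, |v x| ^ q) + ε) := ENNReal.ofReal_le_ofReal fv
      _ = _ := by
          have i0 : 0 ≤ ∫ x in {x | s < |v x|}, |v x| ^ q := integral_nonneg fun x => by positivity
          rw [ENNReal.ofReal_add (by positivity) hε.le, ENNReal.ofReal_mul hl, 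
            ofReal_integral_eq_lintegral_ofReal (hA.integ (by linarith)).integrableOn (.of_forall fun x => by positivity), equi]
  have hU : {x : EuclideanSpace ℝ (Fin N) | s < W x} = ⋃ n : ℕ, {x | s + 1 / ((n:ℝ) + 1) < W x} := by
    ext x
    simp only [mem_ofPred_eq, mem_iUnion]
    constructor
    · intro h
      obtain ⟨n, hn⟩ := exists_nat_one_div_lt (sub_pos.2 h)
      exact ⟨n, by linarith⟩
    · rintro ⟨n, hn⟩
      have : (0:ℝ) < 1 / ((n:ℝ) + 1) := by positivity
      linarith
  rw [hU, setLIntegral_iUnion_of_directed, ← hU]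
  · exact iSup_le fun n => main _ (by have : (0:ℝ) < 1 / ((n:ℝ) + 1) := by positivity
                                      linarith)
  · refine Monotone.directed_le fun n k hnk x hx => ?_
    have hx' : s + 1 / ((n:ℝ) + 1) < W x := hx
    have : 1 / ((k:ℝ) + 1) ≤ 1 / ((n:ℝ) + 1) := Nat.one_div_le_one_div hnk
    show s + 1 / ((k:ℝ) + 1) < W x
    linarith

lemma radial_fderiv {N : ℕ} (w : ℝ → ℝ) (x : EuclideanSpace ℝ (Fin N)) (hx : x ≠ 0) :
    ‖fderiv ℝ (fun x : EuclideanSpace ℝ (Fin N) => w ‖x‖) x‖ = |deriv w ‖x‖| := by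
  have hx0 : 0 < ‖x‖ := norm_pos_iff.2 hx
  have : Nontrivial (EuclideanSpace ℝ (Fin N)) := ⟨x, 0, hx⟩
  by_cases hd : DifferentiableAt ℝ w ‖x‖
  · have h1 : HasFDerivAt (fun x : EuclideanSpace ℝ (Fin N) => w ‖x‖) (deriv w ‖x‖ • fderiv ℝ (fun x => ‖x‖) x) x :=
      hd.hasDerivAt.comp_hasFDerivAt x ((contDiffAt_norm ℝ hx (n := 1)).differentiableAt (by simp)).hasFDerivAt
    rw [h1.fderiv, norm_smul, norm_fderiv_norm ((contDiffAt_norm ℝ hx (n := 1)).differentiableAt (by simp)), mul_one, Real.norm_eq_abs]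
  · rw [deriv_zero_of_not_differentiableAt hd, abs_zero, fderiv_zero_of_not_differentiableAt, norm_zero]
    intro h
    apply hd
    have e : w =ᶠ[nhds ‖x‖] fun ρ => (fun x : EuclideanSpace ℝ (Fin N) => w ‖x‖) ((ρ / ‖x‖) • x) := by
      filter_upwards [lt_mem_nhds hx0] with ρ hρ
      simp only [norm_smul]
      rw [norm_of_nonneg (by positivity), div_mul_cancel₀ _ hx0.ne']
    refine DifferentiableAt.congr_of_eventuallyEq ?_ e
    have h2 : DifferentiableAt ℝ (fun ρ : ℝ => (ρ / ‖x‖) • x) ‖x‖ := by fun_prop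
    apply DifferentiableAt.comp (g := fun x : EuclideanSpace ℝ (Fin N) => w ‖x‖) _ _ h2
    simpa [hx0.ne'] using h

lemma ball_est {N : ℕ} (hN : 2 ≤ N) (p q r : ℝ) (hp : 1 < p) (hpq : p < q) (v : EuclideanSpace ℝ (Fin N) → ℝ) (hA : Adm r v)
    (h1 : ∫ x, |v x| ^ q = 1) (ε : ℝ)
    (h2 : ∫ x, ‖fderiv ℝ v x‖ ^ p < lambdaPQ p q (ball (0 : EuclideanSpace ℝ (Fin N)) r) + ε) (hε : 0 < ε)
    (w : ℝ → ℝ) (M : ℝ) (hM : ∀ x, |v x| ≤ M) (hw : Continuous w) (hwM : ∀ ρ, w ρ ≤ M) (hw0 : ∀ ρ, 0 ≤ w ρ) (hwa : Antitone w)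
    (hvol : ∀ s, 0 ≤ s → ∃ R, 0 ≤ R ∧ {x : EuclideanSpace ℝ (Fin N) | s < w ‖x‖} = ball 0 R ∧
      volume {x | s < |v x|} = volume (ball (0 : EuclideanSpace ℝ (Fin N)) R)) (R : ℝ) :
    ∫⁻ x in ball (0 : EuclideanSpace ℝ (Fin N)) R, ENNReal.ofReal (|deriv w ‖x‖| ^ p) ≤
      ENNReal.ofReal (lambdaPQ p q (ball (0 : EuclideanSpace ℝ (Fin N)) r)) *
        (∫⁻ x in ball (0 : EuclideanSpace ℝ (Fin N)) R, ENNReal.ofReal (w ‖x‖ ^ q)) + ENNReal.ofReal ε := by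
  have le := level_est (by omega) p q r hp hpq v hA h1 ε h2 hε (w R) (hw0 R) w M hM hw hwM hvol
  obtain ⟨R', hR', e1, -⟩ := hvol (w R) (hw0 R)
  have : Nontrivial (EuclideanSpace ℝ (Fin N)) := by
    have : Nonempty (Fin N) := ⟨⟨0, by omega⟩⟩
    infer_instance
  have hsub : {x : EuclideanSpace ℝ (Fin N) | w R < w ‖x‖} ⊆ ball 0 R := by
    intro x (hx : w R < w ‖x‖)
    rw [mem_ball_zero_iff]
    by_contra hc
    exact absurd (hwa (not_lt.1 hc)) (not_le.2 hx)
  calc ∫⁻ x in ball (0 : EuclideanSpace ℝ (Fin N)) R, ENNReal.ofReal (|deriv w ‖x‖| ^ p)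
      ≤ ∫⁻ x in ball (0 : EuclideanSpace ℝ (Fin N)) R, {x : EuclideanSpace ℝ (Fin N) | w R < w ‖x‖}.indicator (fun x => ENNReal.ofReal (‖fderiv ℝ (fun x : EuclideanSpace ℝ (Fin N) => w ‖x‖) x‖ ^ p)) x := by
        apply lintegral_mono_ae
        have n1 : ∀ᵐ x : EuclideanSpace ℝ (Fin N), x ∉ sphere (0 : EuclideanSpace ℝ (Fin N)) R' := by
          rw [ae_iff]; simp only [not_not]; exact Measure.addHaar_sphere (volume : Measure (EuclideanSpace ℝ (Fin N))) 0 R'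
        have n2 : ∀ᵐ x : EuclideanSpace ℝ (Fin N), x ≠ 0 := by
          rw [ae_iff]; simp
        filter_upwards [ae_restrict_of_ae n1, ae_restrict_of_ae n2, ae_restrict_mem measurableSet_ball] with x hx1 hx2 hx3
        by_cases hx : x ∈ {x : EuclideanSpace ℝ (Fin N) | w R < w ‖x‖}
        · rw [indicator_of_mem hx, radial_fderiv w x hx2]
        · have hx4 : R' < ‖x‖ := by
            rw [e1, mem_ball_zero_iff, not_lt] at hx
            refine lt_of_le_of_ne hx fun h => hx1 (by simp [h])
          have hx3' : ‖x‖ < R := by simpa using hx3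
          have : deriv w ‖x‖ = 0 := by
            have e : w =ᶠ[nhds ‖x‖] fun _ => w R := by
              filter_upwards [lt_mem_nhds hx4, gt_mem_nhds hx3'] with ρ h1 h2
              refine le_antisymm ?_ (hwa h2.le)
              by_contra hc
              have hρ0 : 0 ≤ ρ := hR'.trans h1.le
              have : ((ρ / ‖x‖) • x) ∈ {x : EuclideanSpace ℝ (Fin N) | w R < w ‖x‖} := by
                have : ‖(ρ / ‖x‖) • x‖ = ρ := by
                  rw [norm_smul, norm_of_nonneg (by positivity), div_mul_cancel₀ _ (norm_ne_zero_iff.2 hx2)]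
                rw [mem_ofPred_eq, this]; exact not_le.1 hc
              rw [e1, mem_ball_zero_iff, norm_smul, norm_of_nonneg (by positivity), div_mul_cancel₀ _ (norm_ne_zero_iff.2 hx2)] at this
              linarith
            rw [e.deriv_eq, deriv_const]
          rw [this, abs_zero, zero_rpow (by linarith)]
          simp
    _ ≤ ∫⁻ x, {x : EuclideanSpace ℝ (Fin N) | w R < w ‖x‖}.indicator (fun x => ENNReal.ofReal (‖fderiv ℝ (fun x : EuclideanSpace ℝ (Fin N) => w ‖x‖) x‖ ^ p)) x := setLIntegral_le_lintegral _ _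
    _ = _ := lintegral_indicator (measurableSet_lt measurable_const (by fun_prop)) _
    _ ≤ _ := le
    _ ≤ _ := by
        gcongr

lemma crit_open {N : ℕ} (p q : ℝ) (h : ltCritical N p q) : ∃ q', q < q' ∧ ltCritical N p q' := by
  by_cases hp : p < N
  · obtain ⟨q', h1, h2⟩ := exists_between (h hp)
    exact ⟨q', h1, fun _ => h2⟩
  · exact ⟨q + 1, by linarith, fun h => absurd h hp⟩

/-- properties of the profile -/
structure Prof (N : ℕ) (p q r ε : ℝ) (w : ℝ → ℝ) : Prop where
  lip : ∃ K, LipschitzWith K w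
  anti : Antitone w
  nonneg : ∀ ρ, 0 ≤ w ρ
  supp : ∃ r1, 0 < r1 ∧ r1 < r ∧ ∀ ρ, r1 ≤ ρ → w ρ = 0
  norm : ∫⁻ x : EuclideanSpace ℝ (Fin N), ENNReal.ofReal (w ‖x‖ ^ q) = 1
  est : ∀ R, ∫⁻ x in ball (0 : EuclideanSpace ℝ (Fin N)) R, ENNReal.ofReal (|deriv w ‖x‖| ^ p) ≤
      ENNReal.ofReal (lambdaPQ p q (ball (0 : EuclideanSpace ℝ (Fin N)) r)) *
        (∫⁻ x in ball (0 : EuclideanSpace ℝ (Fin N)) R, ENNReal.ofReal (w ‖x‖ ^ q)) + ENNReal.ofReal ε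

lemma profile {N : ℕ} (hN : 2 ≤ N) (p q r : ℝ) (hp : 1 < p) (hpq : p < q) (hr : 0 < r)
    (q' : ℝ) (hq' : q < q') (hc : ltCritical N p q') :
    ∃ C : ℝ, 0 < C ∧ ∀ ε, 0 < ε → ε ≤ 1 → ∃ w, Prof N p q r ε w ∧
      ∫⁻ x : EuclideanSpace ℝ (Fin N), ENNReal.ofReal (w ‖x‖ ^ q') ≤ ENNReal.ofReal C := by
  obtain ⟨C, hC, hS⟩ := sobolev hN p q' hp (by linarith) hc r
  have hl := lam_nonneg p q (ball (0 : EuclideanSpace ℝ (Fin N)) r)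
  refine ⟨(C * (lambdaPQ p q (ball (0 : EuclideanSpace ℝ (Fin N)) r) + 1) ^ p⁻¹) ^ q', by positivity, fun ε hε hε1 => ?_⟩
  obtain ⟨v, hA, h1, h2⟩ := near_min (N := N) p q r hp (by linarith) hr ε hε
  have hvc := hA.1.continuous
  obtain ⟨K, hK⟩ := hA.lip
  obtain ⟨r0, hr0, hsub⟩ := exists_pos_lt_subset_ball hr (isClosed_tsupport v) hA.2.2
  obtain ⟨M, hM⟩ : ∃ M, ∀ x, |v x| ≤ M := by
    obtain ⟨M, hM⟩ := hvc.bounded_above_of_compact_support hA.2.1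
    exact ⟨M, hM⟩
  have hN0 : 0 < N := by omega
  have hz : ∀ x, r0 ≤ ‖x‖ → |v x| = 0 := by
    intro x hx
    have : v x = 0 := image_eq_zero_of_notMem_tsupport fun hh => by
          have := hsub hh
          simp at this; linarith
    rw [this, abs_zero]
  set w := rearr (fun x => |v x|) with hw
  have hKa : LipschitzWith K (fun x => |v x|) := by
    have := (lipschitzWith_one_norm (E := ℝ)).comp hK
    simpa [Function.comp_def] using this
  have hwl : LipschitzWith K w := rearr_lip _ hN0 M hM K hKa r0 hz
  have hwa : Antitone w := rearr_anti _ M hM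
  have hw0 : ∀ ρ, 0 ≤ w ρ := rearr_nonneg _
  have hvol := rearr_vol (fun x => |v x|) hN0 M hM r0 hz
  have hM0 : 0 ≤ M := (abs_nonneg _).trans (hM 0)
  have hwM : ∀ ρ, w ρ ≤ M := by
    intro ρ
    by_contra hc
    have := (lt_rearr_iff (fun x => |v x|) M hM ρ M hM0).1 (not_le.1 hc)
    have e : {x | M < |v x|} = ∅ := by
      ext x; simp [hM x]
    simp [e] at this
  have equi : ∀ Q : ℝ, 0 < Q → ∫⁻ x, ENNReal.ofReal (|v x| ^ Q) = ∫⁻ x : EuclideanSpace ℝ (Fin N), ENNReal.ofReal (w ‖x‖ ^ Q) := by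
    intro Q hQ
    have := equimeas (fun x => |v x|) (fun x => w ‖x‖) hvc.abs.measurable (hwl.continuous.comp continuous_norm).measurable (fun t ht => by
      obtain ⟨R, hR, e1, e2⟩ := hvol t ht
      rw [e2, ← e1]) Q hQ 0 le_rfl
    have e : ∀ f : EuclideanSpace ℝ (Fin N) → ℝ, Measurable f → (∀ x, 0 ≤ f x) → ∫⁻ x in {x | 0 < f x}, ENNReal.ofReal (f x ^ Q) = ∫⁻ x, ENNReal.ofReal (f x ^ Q) := by
      intro f hf h0
      rw [← lintegral_indicator (measurableSet_lt measurable_const hf)]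
      congr 1; ext x
      by_cases hx : 0 < f x
      · simp [indicator, hx]
      · have : f x = 0 := le_antisymm (not_lt.1 hx) (h0 x)
        simp [indicator, this, zero_rpow hQ.ne']
    rw [e _ hvc.abs.measurable fun x => abs_nonneg _, e (fun x => w ‖x‖) (hwl.continuous.comp continuous_norm).measurable fun x => hw0 _] at this
    exact this
  refine ⟨w, ⟨⟨K, hwl⟩, hwa, hw0, ⟨r0, hr0.1, hr0.2, fun ρ hρ => rearr_zero _ M hM r0 hz ρ hρ⟩, ?_, ?_⟩, ?_⟩
  · rw [← equi q (by linarith), ← ofReal_integral_eq_lintegral_ofReal (hA.integ (by linarith)) (.of_forall fun x => by positivity), h1, ENNReal.ofReal_one]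
  · exact ball_est hN p q r hp hpq v hA h1 ε h2 hε w M hM hwl.continuous hwM hw0 hwa hvol
  · rw [← equi q' (by linarith), ← ofReal_integral_eq_lintegral_ofReal (hA.integ (by linarith)) (.of_forall fun x => by positivity)]
    apply ENNReal.ofReal_le_ofReal
    have h3 := hS v (hA.1.of_le (by simp)) hA.2.1 hA.2.2
    set I := ∫ x, |v x| ^ q'
    have hI : 0 ≤ I := integral_nonneg fun x => by positivity
    set D := ∫ x, ‖fderiv ℝ v x‖ ^ p
    have hD : 0 ≤ D := integral_nonneg fun x => by positivity
    have h4 : I ^ (q'⁻¹) ≤ C * (lambdaPQ p q (ball (0 : EuclideanSpace ℝ (Fin N)) r) + 1) ^ p⁻¹ := by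
      refine h3.trans ?_
      gcongr
      linarith
    have h5 := rpow_le_rpow (by positivity) h4 (show 0 ≤ q' by linarith)
    rwa [← rpow_mul hI, inv_mul_cancel₀ (by linarith), rpow_one] at h5

lemma nonconc {N : ℕ} (hN : 2 ≤ N) (p q r : ℝ) (hp : 1 < p) (hpq : p < q) (hr : 0 < r) (hc : ltCritical N p q) :
    ∃ τ c1 : ℝ, 0 < τ ∧ τ < r ∧ 0 < c1 ∧ ∀ ε, 0 < ε → ε ≤ 1 → ∃ w, Prof N p q r ε w ∧ c1 ≤ w τ := by
  obtain ⟨q', hq', hc'⟩ := crit_open p q hc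
  obtain ⟨C, hC, hP⟩ := profile hN p q r hp hpq hr q' hq' hc'
  have hN0 : 0 < N := by omega
  set T : ℝ := (4 * C) ^ (q' - q)⁻¹ with hT
  have hT0 : 0 < T := by positivity
  have hTq : T ^ (q - q') * C = 1 / 4 := by
    rw [hT, ← rpow_mul (by positivity), show (q' - q)⁻¹ * (q - q') = -1 by
      have : q' - q ≠ 0 := by linarith
      field_simp; ring, rpow_neg_one]
    field_simp
  obtain ⟨R, hR0, hR⟩ := vb_surj hN0 (ENNReal.ofReal (1 / (4 * T ^ q))) ENNReal.ofReal_ne_top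
  have hRpos : 0 < R := by
    rcases hR0.eq_or_lt with h | h
    · rw [← h] at hR
      have : 0 < 1 / (4 * T ^ q) := by positivity
      have := ENNReal.ofReal_pos.2 this
      rw [← hR] at this
      simp at this
    · exact h
  set τ := min R (r / 2) with hτ
  have hτ0 : 0 < τ := lt_min hRpos (by linarith)
  have hτr : τ < r := (min_le_right _ _).trans_lt (by linarith)
  set V := (volume (ball (0 : EuclideanSpace ℝ (Fin N)) r)).toReal with hV
  have hV0 : 0 < V := ENNReal.toReal_pos (measure_ball_pos _ _ hr).ne' measure_ball_lt_top.ne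
  have hVe : volume (ball (0 : EuclideanSpace ℝ (Fin N)) r) = ENNReal.ofReal V := (ENNReal.ofReal_toReal measure_ball_lt_top.ne).symm
  refine ⟨τ, (1 / (2 * V)) ^ q⁻¹, hτ0, hτr, by positivity, fun ε hε hε1 => ?_⟩
  obtain ⟨w, hw, hw'⟩ := hP ε hε hε1
  refine ⟨w, hw, ?_⟩
  obtain ⟨K, hK⟩ := hw.lip
  have hWc : Continuous fun x : EuclideanSpace ℝ (Fin N) => w ‖x‖ := hK.continuous.comp continuous_norm
  have b1 : ∫⁻ x in ball (0 : EuclideanSpace ℝ (Fin N)) τ, ENNReal.ofReal (w ‖x‖ ^ q) ≤ ENNReal.ofReal (1 / 2) := by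
    calc ∫⁻ x in ball (0 : EuclideanSpace ℝ (Fin N)) τ, ENNReal.ofReal (w ‖x‖ ^ q)
        ≤ ∫⁻ x in ball (0 : EuclideanSpace ℝ (Fin N)) τ, (ENNReal.ofReal (T ^ q) + ENNReal.ofReal (T ^ (q - q')) * ENNReal.ofReal (w ‖x‖ ^ q')) := by
          refine lintegral_mono fun x => ?_
          rw [← ENNReal.ofReal_mul (by positivity), ← ENNReal.ofReal_add (by positivity) (mul_nonneg (by positivity) (rpow_nonneg (hw.nonneg _) _))]
          apply ENNReal.ofReal_le_ofReal
          by_cases h : w ‖x‖ ≤ T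
          · have h1 := rpow_le_rpow (hw.nonneg _) h (show 0 ≤ q by linarith)
            have h2 : 0 ≤ T ^ (q - q') * w ‖x‖ ^ q' := mul_nonneg (by positivity) (rpow_nonneg (hw.nonneg _) _)
            linarith
          · push Not at h
            have hw0 : 0 < w ‖x‖ := by linarith
            have h1 : w ‖x‖ ^ q = w ‖x‖ ^ (q - q') * w ‖x‖ ^ q' := by rw [← rpow_add hw0]; congr 1; ring
            have h2 : w ‖x‖ ^ (q - q') ≤ T ^ (q - q') := rpow_le_rpow_of_nonpos hT0 h.le (by linarith)
            have h3 := mul_le_mul_of_nonneg_right h2 (show 0 ≤ w ‖x‖ ^ q' by positivity)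
            have h4 : 0 ≤ T ^ q := by positivity
            linarith
      _ = ENNReal.ofReal (T ^ q) * volume (ball (0 : EuclideanSpace ℝ (Fin N)) τ) + ENNReal.ofReal (T ^ (q - q')) * ∫⁻ x in ball (0 : EuclideanSpace ℝ (Fin N)) τ, ENNReal.ofReal (w ‖x‖ ^ q') := by
          rw [lintegral_add_left measurable_const, lintegral_const, Measure.restrict_apply_univ, lintegral_const_mul' _ _ ENNReal.ofReal_ne_top]
      _ ≤ ENNReal.ofReal (T ^ q) * ENNReal.ofReal (1 / (4 * T ^ q)) + ENNReal.ofReal (T ^ (q - q')) * ENNReal.ofReal C := by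
          gcongr
          · rw [← hR]; exact measure_mono (ball_subset_ball (min_le_left _ _))
          · exact (setLIntegral_le_lintegral _ _).trans hw'
      _ = ENNReal.ofReal (1 / 2) := by
          rw [← ENNReal.ofReal_mul (by positivity), ← ENNReal.ofReal_mul (by positivity), ← ENNReal.ofReal_add (by positivity) (by positivity), hTq]
          congr 1
          field_simp; norm_num
  have b2 : ∫⁻ x in (ball (0 : EuclideanSpace ℝ (Fin N)) τ)ᶜ, ENNReal.ofReal (w ‖x‖ ^ q) ≤ ENNReal.ofReal (w τ ^ q * V) := by
    rw [← lintegral_indicator measurableSet_ball.compl, ENNReal.ofReal_mul (rpow_nonneg (hw.nonneg _) _), ← hVe, ← lintegral_indicator_const measurableSet_ball]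
    refine lintegral_mono fun x => ?_
    by_cases hx : x ∈ ball (0 : EuclideanSpace ℝ (Fin N)) τ
    · simp [hx]
    · rw [indicator_of_mem (by exact hx)]
      by_cases hx2 : x ∈ ball (0 : EuclideanSpace ℝ (Fin N)) r
      · rw [indicator_of_mem hx2]
        exact ENNReal.ofReal_le_ofReal (rpow_le_rpow (hw.nonneg _) (hw.anti (by simpa using hx)) (by linarith))
      · obtain ⟨r1, -, h1, h2⟩ := hw.supp
        have : w ‖x‖ = 0 := h2 _ (by simp at hx2; linarith)
        simp [this, zero_rpow (show q ≠ 0 by linarith)]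
  have b3 := hw.norm
  rw [← lintegral_add_compl _ (measurableSet_ball (x := (0 : EuclideanSpace ℝ (Fin N))) (ε := τ))] at b3
  have b4 := b3 ▸ add_le_add b1 b2
  rw [← ENNReal.ofReal_add (by norm_num) (mul_nonneg (rpow_nonneg (hw.nonneg _) _) hV0.le), ← ENNReal.ofReal_one] at b4
  have b5 := (ENNReal.ofReal_le_ofReal_iff' ).1 b4
  have b6 : 1 / (2 * V) ≤ w τ ^ q := by
    rcases b5 with h | h
    · rw [div_le_iff₀ (by positivity)]; linarith
    · norm_num at h
  have b7 := rpow_le_rpow (by positivity) b6 (show 0 ≤ q⁻¹ by have : 0 < q := by linarith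
                                                              positivity)
  rwa [← rpow_mul (hw.nonneg _), mul_inv_cancel₀ (by linarith), rpow_one] at b7

lemma polar {N : ℕ} (hN : 0 < N) (f : EuclideanSpace ℝ (Fin N) → ℝ≥0∞) (hf : Measurable f) :
    ∫⁻ x, f x = ∫⁻ θ, ∫⁻ ρ, f (ρ.1 • θ.1) ∂(Measure.volumeIoiPow
      (Module.finrank ℝ (EuclideanSpace ℝ (Fin N)) - 1))
      ∂((volume : Measure (EuclideanSpace ℝ (Fin N))).toSphere) := by
  haveI : Nonempty (Fin N) := ⟨⟨0, hN⟩⟩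
  rw [← restrict_compl_singleton (μ := (volume : Measure (EuclideanSpace ℝ (Fin N)))) 0,
    ← lintegral_subtype_comap (measurableSet_singleton _).compl f]
  have hm : Measurable (fun z : sphere (0 : EuclideanSpace ℝ (Fin N)) 1 × Ioi (0 : ℝ) =>
      f (z.2.1 • z.1.1)) := by
    apply hf.comp
    fun_prop
  rw [restrict_compl_singleton]
  have h := (volume : Measure (EuclideanSpace ℝ (Fin N))).measurePreserving_homeomorphUnitSphereProd.lintegral_comp hm
  rw [lintegral_prod _ hm.aemeasurable] at h
  rw [← h]
  refine lintegral_congr fun x => ?_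
  congr 1
  have : ‖(x : EuclideanSpace ℝ (Fin N))‖ ≠ 0 := norm_ne_zero_iff.2 x.2
  simp [smul_smul, this]

lemma transfer {N : ℕ} (hN : 0 < N) (a b : ℝ → ℝ≥0∞) (ha : Measurable a) (hb : Measurable b)
    (e : ℝ≥0∞)
    (h : ∀ R, ∫⁻ x in ball (0 : EuclideanSpace ℝ (Fin N)) R, a ‖x‖ ≤
      (∫⁻ x in ball (0 : EuclideanSpace ℝ (Fin N)) R, b ‖x‖) + e)
    (r : ℝ) (D : Set (EuclideanSpace ℝ (Fin N))) (hD : IsOpen D) (hDr : D ⊆ ball 0 r)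
    (hs : ∀ x ∈ D, ∀ t : ℝ, 0 < t → t ≤ 1 → t • x ∈ D) :
    ∫⁻ x in D, a ‖x‖ ≤ (∫⁻ x in D, b ‖x‖) + e := by
  haveI : Nonempty (Fin N) := ⟨⟨0, hN⟩⟩
  set σ := (volume : Measure (EuclideanSpace ℝ (Fin N))).toSphere with hσ
  set ν := Measure.volumeIoiPow (Module.finrank ℝ (EuclideanSpace ℝ (Fin N)) - 1) with hν
  have hS0 : σ univ ≠ 0 := by
    rw [Ne, Measure.measure_univ_eq_zero]
    exact Measure.toSphere_ne_zero _
  have hSt : σ univ ≠ ∞ := measure_ne_top _ _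
  have nrm : ∀ (θ : sphere (0 : EuclideanSpace ℝ (Fin N)) 1) (ρ : Ioi (0 : ℝ)),
      ‖ρ.1 • θ.1‖ = ρ.1 := by
    intro θ ρ
    have : ‖θ.1‖ = 1 := by simpa using θ.2
    rw [norm_smul, this, mul_one, Real.norm_of_nonneg (le_of_lt ρ.2)]
  have key : ∀ (g : ℝ → ℝ≥0∞), Measurable g → ∀ S : Set (EuclideanSpace ℝ (Fin N)), MeasurableSet S →
      ∫⁻ x in S, g ‖x‖ = ∫⁻ θ, ∫⁻ ρ in {ρ : Ioi (0:ℝ) | ρ.1 • θ.1 ∈ S}, g ρ.1 ∂ν ∂σ := by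
    intro g hg S hS
    rw [← lintegral_indicator hS, polar hN (S.indicator fun x => g ‖x‖) ((hg.comp measurable_norm).indicator hS)]
    refine lintegral_congr fun θ => ?_
    have hm : MeasurableSet {ρ : Ioi (0:ℝ) | ρ.1 • θ.1 ∈ S} := by
      have : Measurable (fun ρ : Ioi (0:ℝ) => ρ.1 • θ.1) := by fun_prop
      exact this hS
    rw [← lintegral_indicator hm]
    refine lintegral_congr fun ρ => ?_
    by_cases hx : ρ.1 • θ.1 ∈ S
    · rw [indicator_of_mem hx, indicator_of_mem (by exact hx), nrm]
    · rw [indicator_of_notMem hx, indicator_of_notMem (by exact hx)]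
  have one : ∀ R : ℝ, ∫⁻ ρ in {ρ : Ioi (0:ℝ) | ρ.1 < R}, a ρ.1 ∂ν ≤
      (∫⁻ ρ in {ρ : Ioi (0:ℝ) | ρ.1 < R}, b ρ.1 ∂ν) + e / σ univ := by
    intro R
    have hR := h R
    rw [key a ha _ measurableSet_ball, key b hb _ measurableSet_ball] at hR
    have hb' : ∀ θ : sphere (0 : EuclideanSpace ℝ (Fin N)) 1,
        {ρ : Ioi (0:ℝ) | ρ.1 • θ.1 ∈ ball (0 : EuclideanSpace ℝ (Fin N)) R} =
        {ρ : Ioi (0:ℝ) | ρ.1 < R} := by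
      intro θ; ext ρ
      simp only [mem_ofPred_eq, mem_ball_zero_iff, nrm]
    simp only [hb', lintegral_const] at hR
    rw [← ENNReal.mul_le_mul_iff_left hS0 hSt, add_mul, ENNReal.div_mul_cancel hS0 hSt]
    exact hR
  rw [key a ha _ hD.measurableSet, key b hb _ hD.measurableSet]
  calc _ ≤ ∫⁻ θ, ((∫⁻ ρ in {ρ : Ioi (0:ℝ) | ρ.1 • θ.1 ∈ D}, b ρ.1 ∂ν) + e / σ univ) ∂σ := by
        refine lintegral_mono fun θ => ?_
        show ∫⁻ ρ in {ρ : Ioi (0:ℝ) | ρ.1 • θ.1 ∈ D}, a ρ.1 ∂ν ≤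
          (∫⁻ ρ in {ρ : Ioi (0:ℝ) | ρ.1 • θ.1 ∈ D}, b ρ.1 ∂ν) + e / σ univ
        have : ∃ R : ℝ, {ρ : Ioi (0:ℝ) | ρ.1 • θ.1 ∈ D} = {ρ : Ioi (0:ℝ) | ρ.1 < R} := by
          set J := {ρ : ℝ | 0 < ρ ∧ ρ • θ.1 ∈ D} with hJ
          have hJb : BddAbove J := by
            refine ⟨r, fun ρ hρ => ?_⟩
            have := hDr hρ.2
            rw [mem_ball_zero_iff, nrm θ ⟨ρ, hρ.1⟩] at this
            exact this.le
          have hJo : IsOpen J := by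
            refine (isOpen_Ioi (a := (0:ℝ))).inter (hD.preimage (f := fun ρ : ℝ => ρ • θ.1) (by fun_prop))
          refine ⟨sSup J, ?_⟩
          ext ρ
          simp only [mem_ofPred_eq]
          constructor
          · intro hρ
            have hm : ρ.1 ∈ J := ⟨ρ.2, hρ⟩
            obtain ⟨η, hη, hη'⟩ := Metric.isOpen_iff.1 hJo _ hm
            have : ρ.1 + η / 2 ∈ J := hη' (by rw [mem_ball, dist_eq_norm]; simp [abs_of_pos hη]; linarith)
            linarith [le_csSup hJb this]
          · intro hρ
            have hne : J.Nonempty := by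
              by_contra hne
              rw [not_nonempty_iff_eq_empty] at hne
              rw [hne, Real.sSup_empty] at hρ
              exact absurd ρ.2 (not_lt.2 hρ.le)
            obtain ⟨s, hsJ, hsρ⟩ := exists_lt_of_lt_csSup hne hρ
            have hρ0 : 0 < ρ.1 := ρ.2
            have := hs _ hsJ.2 (ρ.1 / s) (div_pos hρ0 hsJ.1) ((div_le_one hsJ.1).2 hsρ.le)
            rwa [smul_smul, div_mul_cancel₀ _ hsJ.1.ne'] at this
        obtain ⟨R, hR⟩ := this
        rw [hR]
        exact one R
    _ = _ := by
        rw [lintegral_add_right _ measurable_const, lintegral_const, ENNReal.div_mul_cancel hS0 hSt]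

lemma prof_alpha {N : ℕ} (hN : 0 < N) (p q r ε : ℝ) (w : ℝ → ℝ) (hq : 0 < q) (hw : Prof N p q r ε w)
    (D : Set (EuclideanSpace ℝ (Fin N))) (hD : IsOpen D) (hDr : D ⊆ ball 0 r)
    (hs : ∀ x ∈ D, ∀ t : ℝ, 0 < t → t ≤ 1 → t • x ∈ D) :
    ∫⁻ x in D, ENNReal.ofReal (|deriv w ‖x‖| ^ p) ≤
      ENNReal.ofReal (lambdaPQ p q (ball (0 : EuclideanSpace ℝ (Fin N)) r)) *
        (∫⁻ x in D, ENNReal.ofReal (w ‖x‖ ^ q)) + ENNReal.ofReal ε := by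
  obtain ⟨K, hK⟩ := hw.lip
  have hwm : Measurable w := hK.continuous.measurable
  have h1 : Measurable fun s => ENNReal.ofReal (|deriv w s| ^ p) := by
    have := measurable_deriv w
    fun_prop
  have h2 : Measurable fun s => ENNReal.ofReal (lambdaPQ p q (ball (0 : EuclideanSpace ℝ (Fin N)) r)) *
      ENNReal.ofReal (w s ^ q) := by fun_prop
  have e : ∀ S : Set (EuclideanSpace ℝ (Fin N)),
      ENNReal.ofReal (lambdaPQ p q (ball (0 : EuclideanSpace ℝ (Fin N)) r)) *
        (∫⁻ x in S, ENNReal.ofReal (w ‖x‖ ^ q)) =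
      ∫⁻ x in S, ENNReal.ofReal (lambdaPQ p q (ball (0 : EuclideanSpace ℝ (Fin N)) r)) *
      ENNReal.ofReal (w ‖x‖ ^ q) := by
    intro S
    rw [lintegral_const_mul]
    have : Measurable (fun x : EuclideanSpace ℝ (Fin N) => w ‖x‖) := hwm.comp measurable_norm
    fun_prop
  rw [e]
  refine transfer hN (fun s => ENNReal.ofReal (|deriv w s| ^ p)) _ h1 h2 _ (fun R => ?_) r D hD hDr hs
  have := hw.est R
  rw [e] at this
  exact this

lemma prof_beta {N : ℕ} (hN : 0 < N) (p q r ε : ℝ) (w : ℝ → ℝ) (hq : 0 < q) (hw : Prof N p q r ε w)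
    (D : Set (EuclideanSpace ℝ (Fin N))) (hD : IsOpen D) (hDr : D ⊆ ball 0 r)
    (hs : ∀ x ∈ D, ∀ t : ℝ, 0 < t → t ≤ 1 → t • x ∈ D) :
    volume D ≤ volume (ball (0 : EuclideanSpace ℝ (Fin N)) r) *
        (∫⁻ x in D, ENNReal.ofReal (w ‖x‖ ^ q)) := by
  obtain ⟨K, hK⟩ := hw.lip
  have hwm : Measurable w := hK.continuous.measurable
  have hwn : Measurable (fun x : EuclideanSpace ℝ (Fin N) => w ‖x‖) := hwm.comp measurable_norm
  obtain ⟨r1, hr1, hr1r, hz⟩ := hw.supp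
  set V := volume (ball (0 : EuclideanSpace ℝ (Fin N)) r) with hV
  have e : ∀ S : Set (EuclideanSpace ℝ (Fin N)),
      V * (∫⁻ x in S, ENNReal.ofReal (w ‖x‖ ^ q)) =
      ∫⁻ x in S, V * ENNReal.ofReal (w ‖x‖ ^ q) := by
    intro S
    rw [lintegral_const_mul]
    fun_prop
  have h1 : Measurable ((Iio r).indicator (fun _ : ℝ => (1:ℝ≥0∞))) := measurable_const.indicator measurableSet_Iio
  have h2 : Measurable fun s => V * ENNReal.ofReal (w s ^ q) := by fun_prop
  have hin : ∀ S : Set (EuclideanSpace ℝ (Fin N)), MeasurableSet S →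
      ∫⁻ x in S, (Iio r).indicator (fun _ : ℝ => (1:ℝ≥0∞)) ‖x‖ = volume (S ∩ ball 0 r) := by
    intro S hS
    have : ∀ x : EuclideanSpace ℝ (Fin N), (Iio r).indicator (fun _ : ℝ => (1:ℝ≥0∞)) ‖x‖ =
      (ball (0 : EuclideanSpace ℝ (Fin N)) r).indicator 1 x := by
      intro x; simp [indicator]
    simp only [this]
    rw [lintegral_indicator_one measurableSet_ball, Measure.restrict_apply measurableSet_ball, inter_comm]
  have full : ∀ R, r ≤ R → ∫⁻ x in ball (0 : EuclideanSpace ℝ (Fin N)) R, ENNReal.ofReal (w ‖x‖ ^ q) = 1 := by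
    intro R hR
    rw [← hw.norm, ← lintegral_indicator measurableSet_ball]
    refine lintegral_congr fun x => ?_
    by_cases hx : x ∈ ball (0 : EuclideanSpace ℝ (Fin N)) R
    · rw [indicator_of_mem hx]
    · rw [indicator_of_notMem hx, hz _ (by rw [mem_ball_zero_iff] at hx; linarith), zero_rpow hq.ne']
      simp
  have := transfer hN _ _ h1 h2 0 (fun R => ?_) r D hD hDr hs
  · rw [hin _ hD.measurableSet, inter_eq_left.2 hDr, add_zero, ← e] at this
    exact this
  · rw [hin _ measurableSet_ball, add_zero, ← e]
    rcases le_or_gt r R with hR | hR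
    · rw [full R hR, mul_one]
      exact measure_mono inter_subset_right
    · rw [inter_eq_left.2 (ball_subset_ball hR.le)]
      set I := ∫⁻ x in ball (0 : EuclideanSpace ℝ (Fin N)) R, ENNReal.ofReal (w ‖x‖ ^ q) with hI
      set m := ENNReal.ofReal (w R ^ q) with hm
      set BR := ball (0 : EuclideanSpace ℝ (Fin N)) R with hBR
      set O := ball (0 : EuclideanSpace ℝ (Fin N)) r \ BR with hO
      have a1 : volume BR * m ≤ I := by
        rw [mul_comm, ← setLIntegral_const]
        refine setLIntegral_mono' measurableSet_ball fun x hx => ?_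
        exact ENNReal.ofReal_le_ofReal (rpow_le_rpow (hw.nonneg _) (hw.anti (by simpa using (mem_ball_zero_iff.1 hx).le)) hq.le)
      have a2 : ∫⁻ x in O, ENNReal.ofReal (w ‖x‖ ^ q) ≤ m * volume O := by
        rw [← setLIntegral_const]
        refine setLIntegral_mono' (measurableSet_ball.diff measurableSet_ball) fun x hx => ?_
        refine ENNReal.ofReal_le_ofReal (rpow_le_rpow (hw.nonneg _) (hw.anti ?_) hq.le)
        have := hx.2
        rw [hBR, mem_ball_zero_iff] at this
        linarith
      have hsub : BR ⊆ ball 0 r := ball_subset_ball hR.le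
      have a3 : I + ∫⁻ x in O, ENNReal.ofReal (w ‖x‖ ^ q) = 1 := by
        rw [← full r le_rfl, hI, ← lintegral_union (measurableSet_ball.diff measurableSet_ball) disjoint_sdiff_right,
          union_diff_cancel hsub]
      have a4 : V = volume BR + volume O := by
        rw [hV, ← measure_union disjoint_sdiff_right (measurableSet_ball.diff measurableSet_ball),
          union_diff_cancel hsub]
      calc volume BR = volume BR * (I + ∫⁻ x in O, ENNReal.ofReal (w ‖x‖ ^ q)) := by rw [a3, mul_one]
        _ ≤ volume BR * (I + m * volume O) := by gcongr
        _ = volume BR * I + (volume BR * m) * volume O := by ring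
        _ ≤ volume BR * I + I * volume O := by gcongr
        _ = V * I := by rw [a4]; ring

lemma half_est {N : ℕ} (hN : 2 ≤ N) (p q r τ c1 : ℝ) (hq : 0 < q) (hτ : 0 < τ) (hτr : τ < r) (hc1 : 0 < c1) :
    ∃ δ : ℝ, 0 < δ ∧ ∀ (ε : ℝ) (w : ℝ → ℝ), Prof N p q r ε w → c1 ≤ w τ →
    ∀ (D : Set (EuclideanSpace ℝ (Fin N))) (e : EuclideanSpace ℝ (Fin N)), ‖e‖ = 2 * r →
    (∀ y ∈ D, ‖y‖ ^ 2 ≤ 2 * inner ℝ y e) →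
    ∫⁻ x in D, ENNReal.ofReal (w ‖x‖ ^ q) ≤ ENNReal.ofReal (1 / 2 - δ) := by
  have hr : 0 < r := hτ.trans hτr
  set s := τ ^ 2 / (64 * r) with hs
  have hs0 : 0 < s := by positivity
  have hs64 : s * (64 * r) = τ ^ 2 := by rw [hs]; field_simp
  have hsτ : s ≤ τ / 64 := by
    rw [hs, div_le_div_iff₀ (by positivity) (by norm_num)]; nlinarith
  set v := volume.real (ball (0 : EuclideanSpace ℝ (Fin N)) s) with hv
  have hv0 : 0 < v := ENNReal.toReal_pos (measure_ball_pos _ _ hs0).ne' measure_ball_lt_top.ne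
  refine ⟨c1 ^ q * v / 2, by positivity, ?_⟩
  intro ε w hw hcw D e he hD
  set F : EuclideanSpace ℝ (Fin N) → ℝ≥0∞ := fun x => ENNReal.ofReal (w ‖x‖ ^ q) with hF
  obtain ⟨f, hf0, hfe⟩ : ∃ f : EuclideanSpace ℝ (Fin N), ‖f‖ = 1 ∧ inner ℝ e f = 0 := by
    have : LinearMap.ker (innerₛₗ ℝ e) ≠ ⊥ := by
      apply LinearMap.ker_ne_bot_of_finrank_lt
      simp; omega
    obtain ⟨g, hg, hg0⟩ := Submodule.exists_mem_ne_zero_of_ne_bot this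
    refine ⟨‖g‖⁻¹ • g, ?_, ?_⟩
    · rw [norm_smul, norm_inv, norm_norm, inv_mul_cancel₀ (norm_ne_zero_iff.2 hg0)]
    · rw [inner_smul_right]
      have : inner ℝ e g = 0 := by simpa using hg
      rw [this, mul_zero]
  set H := {y : EuclideanSpace ℝ (Fin N) | ‖y‖ ^ 2 ≤ 2 * inner ℝ y e} with hH
  set P := H \ {0} with hP
  have hHm : MeasurableSet H := measurableSet_le (by fun_prop) (by fun_prop)
  have hPm : MeasurableSet P := hHm.diff (measurableSet_singleton _)
  haveI : Nonempty (Fin N) := ⟨⟨0, by omega⟩⟩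
  set A := ∫⁻ x in P, F x with hA
  have hDA : ∫⁻ x in D, F x ≤ A := by
    calc _ ≤ ∫⁻ x in H, F x := lintegral_mono_set hD
      _ = _ := by
        rw [hA, hP]
        exact (setLIntegral_congr (diff_null_ae_eq_self (measure_singleton _))).symm
  have hnegA : ∫⁻ x in -P, F x = A := by
    have := (Measure.measurePreserving_neg (volume : Measure (EuclideanSpace ℝ (Fin N)))).setLIntegral_comp_preimage_emb
      (MeasurableEquiv.neg _).measurableEmbedding F P
    rw [hA, ← this]
    refine lintegral_congr fun x => ?_
    simp [hF]
  set U := ball ((τ/2) • f) s with hU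
  have hUi : ∀ y ∈ U, |2 * inner ℝ y e| < ‖y‖ ^ 2 ∧ ‖y‖ < τ := by
    intro y hy
    have hzn : ‖(τ/2) • f‖ = τ / 2 := by rw [norm_smul, hf0, mul_one, norm_of_nonneg (by positivity)]
    have hd : ‖y - (τ/2) • f‖ < s := by rwa [hU, mem_ball, dist_eq_norm] at hy
    have h1 : inner ℝ y e = inner ℝ (y - (τ/2) • f) e := by
      rw [inner_sub_left, inner_smul_left, real_inner_comm e f, hfe]
      simp
    have h2 : |inner ℝ y e| ≤ s * (2 * r) := by
      rw [h1]
      refine (abs_real_inner_le_norm _ _).trans ?_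
      rw [he]; gcongr
    have h3 : τ / 2 - s < ‖y‖ := by
      have := norm_sub_norm_le ((τ/2) • f) y
      rw [hzn, norm_sub_rev] at this; linarith
    have h4 : ‖y‖ < τ / 2 + s := by
      have := norm_sub_norm_le y ((τ/2) • f)
      rw [hzn] at this; linarith
    refine ⟨?_, by linarith⟩
    rw [abs_mul, abs_two]
    have : τ / 4 < ‖y‖ := by linarith
    nlinarith
  have hUF : ENNReal.ofReal (c1 ^ q * v) ≤ ∫⁻ x in U, F x := by
    have : ENNReal.ofReal (c1 ^ q * v) = ENNReal.ofReal (c1 ^ q) * volume U := by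
      rw [ENNReal.ofReal_mul (by positivity), hv, Measure.real, ENNReal.ofReal_toReal measure_ball_lt_top.ne, hU,
        Measure.addHaar_ball_center volume ((τ/2) • f) s]
    rw [this, ← setLIntegral_const]
    refine setLIntegral_mono' measurableSet_ball fun x hx => ?_
    exact ENNReal.ofReal_le_ofReal (rpow_le_rpow hc1.le (hcw.trans (hw.anti (hUi x hx).2.le)) hq.le)
  have d1 : Disjoint P (-P) := by
    rw [Set.disjoint_left]
    intro y hy hy'
    have a1 := hy.1
    have a2 := hy'.1
    simp only [hH, mem_ofPred_eq, norm_neg, inner_neg_left] at a1 a2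
    have : ‖y‖ ^ 2 ≤ 0 := by linarith
    exact hy.2 (by simpa using this)
  have d2 : Disjoint (P ∪ -P) U := by
    rw [Set.disjoint_left]
    intro y hy hyU
    have := (hUi y hyU).1
    rcases hy with hy | hy
    · have a1 := hy.1
      simp only [hH, mem_ofPred_eq] at a1
      linarith [le_abs_self (2 * inner ℝ y e)]
    · have a1 := hy.1
      simp only [hH, mem_ofPred_eq, norm_neg, inner_neg_left] at a1
      linarith [neg_le_abs (2 * inner ℝ y e)]
  have tot : A + A + ENNReal.ofReal (c1 ^ q * v) ≤ 1 := by
    calc _ ≤ (∫⁻ x in P, F x) + (∫⁻ x in -P, F x) + ∫⁻ x in U, F x := by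
          rw [hnegA]; gcongr
      _ = ∫⁻ x in (P ∪ -P) ∪ U, F x := by
          rw [lintegral_union measurableSet_ball d2, lintegral_union hPm.neg d1]
      _ ≤ ∫⁻ x, F x := setLIntegral_le_lintegral _ _
      _ = 1 := hw.norm
  refine hDA.trans ?_
  have hAt : A ≠ ∞ := by
    intro h; rw [h] at tot; simp at tot
  rw [← ENNReal.ofReal_toReal hAt]
  rw [← ENNReal.ofReal_toReal hAt, ← ENNReal.ofReal_add (by positivity) (by positivity),
    ← ENNReal.ofReal_add (by positivity) (by positivity), ENNReal.ofReal_le_one] at tot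
  apply ENNReal.ofReal_le_ofReal
  linarith

/-- Data of a one-sided test function on a star-shaped piece `D` of the ball. -/
structure TestFn {N : ℕ} (p q r m : ℝ) (D : Set (EuclideanSpace ℝ (Fin N)))
    (f : EuclideanSpace ℝ (Fin N) → ℝ) : Prop where
  lip : ∃ K, LipschitzWith K f
  nonneg : ∀ x, 0 ≤ f x
  pos : ∃ s, 0 < s ∧ ∀ x, ‖x‖ < s → 0 < f x
  supp : ∃ r1, 0 < r1 ∧ r1 < r ∧ ∀ x, r1 ≤ ‖x‖ → f x = 0
  est : ∃ A : ℝ, 0 < A ∧ ∫⁻ x in D, ENNReal.ofReal (f x ^ q) = ENNReal.ofReal A ∧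
    ∫⁻ x in D, ENNReal.ofReal (‖fderiv ℝ f x‖ ^ p) ≤ ENNReal.ofReal (m * A ^ (p / q))

lemma cone_case {N : ℕ} (p q r m κ : ℝ) (hp : 1 < p) (hpq : p < q) (hr : 0 < r)
    (hκ : 0 < κ) (hm : κ ^ (1 - p / q) ≤ m * ((r / 4) ^ q * (1/4)^N) ^ (p / q))
    (D : Set (EuclideanSpace ℝ (Fin N))) (hD : IsOpen D) (hDne : D.Nonempty) (hDr : D ⊆ ball 0 r)
    (hs : ∀ x ∈ D, ∀ t : ℝ, 0 < t → t ≤ 1 → t • x ∈ D) (hvol : volume.real D ≤ κ) :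
    TestFn p q r m D (fun x => max (r / 2 - ‖x‖) 0) := by
  have hq : 0 < q := by linarith
  have hβ : 0 < 1 - p / q := by rw [sub_pos, div_lt_one hq]; exact hpq
  set f : EuclideanSpace ℝ (Fin N) → ℝ := fun x => max (r / 2 - ‖x‖) 0 with hf
  have hlip : LipschitzWith 1 f := by
    have h1 : LipschitzWith 1 (fun x : EuclideanSpace ℝ (Fin N) => r / 2 - ‖x‖) := by
      refine LipschitzWith.of_dist_le_mul fun x y => ?_
      rw [Real.dist_eq, dist_eq_norm, NNReal.coe_one, one_mul, ← abs_neg]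
      convert abs_norm_sub_norm_le x y using 2; ring
    exact h1.max_const 0
  have hDt : volume D ≠ ∞ := ((measure_mono hDr).trans_lt measure_ball_lt_top).ne
  have hD0 : 0 < volume.real D := ENNReal.toReal_pos (hD.measure_pos _ hDne).ne' hDt
  set V := volume.real D with hV
  have hVD : volume D = ENNReal.ofReal V := by rw [hV, Measure.real, ENNReal.ofReal_toReal hDt]
  set k := (r / 4) ^ q * (1/4)^N with hk
  have hk0 : 0 < k := by positivity
  have hA1 : ENNReal.ofReal (k * V) ≤ ∫⁻ x in D, ENNReal.ofReal (f x ^ q) := by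
    have hsub : (1/4 : ℝ) • D ⊆ D := by
      rintro _ ⟨y, hy, rfl⟩
      exact hs y hy _ (by norm_num) (by norm_num)
    have hvq : volume ((1/4 : ℝ) • D) = ENNReal.ofReal ((1/4)^N * V) := by
      rw [Measure.addHaar_smul, hVD, ← ENNReal.ofReal_mul (by positivity)]
      congr 2
      simp
    calc ENNReal.ofReal (k * V) = ENNReal.ofReal ((r/4)^q) * volume ((1/4 : ℝ) • D) := by
          rw [hvq, ← ENNReal.ofReal_mul (by positivity), hk, mul_assoc]
      _ ≤ ∫⁻ x in (1/4 : ℝ) • D, ENNReal.ofReal (f x ^ q) := by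
          rw [← setLIntegral_const]
          refine setLIntegral_mono' (hD.smul₀ (by norm_num)).measurableSet ?_
          rintro _ ⟨y, hy, rfl⟩
          refine ENNReal.ofReal_le_ofReal (rpow_le_rpow (by positivity) ?_ hq.le)
          have h1 := mem_ball_zero_iff.1 (hDr hy)
          have h2 : ‖(1/4 : ℝ) • y‖ = 1/4 * ‖y‖ := by rw [norm_smul, norm_of_nonneg (by norm_num)]
          simp only [hf]
          rw [h2]
          exact le_max_of_le_left (by linarith)
      _ ≤ _ := lintegral_mono_set hsub
  have hA2 : ∫⁻ x in D, ENNReal.ofReal (f x ^ q) ≠ ∞ := by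
    refine ne_top_of_le_ne_top (b := ENNReal.ofReal ((r/2)^q) * volume D) (ENNReal.mul_ne_top ENNReal.ofReal_ne_top hDt) ?_
    rw [← setLIntegral_const]
    refine lintegral_mono fun x => ENNReal.ofReal_le_ofReal (rpow_le_rpow (le_max_right _ _) ?_ hq.le)
    simp only [hf]
    exact max_le (by linarith [norm_nonneg x]) (by positivity)
  refine ⟨⟨1, hlip⟩, fun x => le_max_right _ _, ⟨r/2, by positivity, fun x hx => lt_max_of_lt_left (by linarith)⟩,
    ⟨r/2, by positivity, by linarith, fun x hx => max_eq_right (by linarith)⟩, ?_⟩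
  refine ⟨(∫⁻ x in D, ENNReal.ofReal (f x ^ q)).toReal, ?_, (ENNReal.ofReal_toReal hA2).symm, ?_⟩
  · refine ENNReal.toReal_pos ?_ hA2
    have : 0 < ENNReal.ofReal (k * V) := by simp; positivity
    exact (this.trans_le hA1).ne'
  · set A := (∫⁻ x in D, ENNReal.ofReal (f x ^ q)).toReal with hA
    have hAk : k * V ≤ A := by
      rwa [← ENNReal.ofReal_toReal hA2, ENNReal.ofReal_le_ofReal_iff (by positivity)] at hA1
    calc _ ≤ ∫⁻ x in D, 1 := by
          refine lintegral_mono fun x => ?_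
          rw [← ENNReal.ofReal_one]
          refine ENNReal.ofReal_le_ofReal (rpow_le_one (norm_nonneg _) ?_ (by linarith))
          simpa using norm_fderiv_le_of_lipschitz ℝ (x₀ := x) hlip
      _ = ENNReal.ofReal V := by rw [setLIntegral_const, one_mul, hVD]
      _ ≤ _ := by
          apply ENNReal.ofReal_le_ofReal
          have hm0 : 0 < m := by
            have : 0 < m * k ^ (p / q) := (by positivity : 0 < κ ^ (1 - p/q)).trans_le hm
            exact pos_of_mul_pos_left this (by positivity)
          calc V = V ^ (1 - p / q) * V ^ (p / q) := by
                rw [← rpow_add hD0]; simp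
            _ ≤ κ ^ (1 - p / q) * V ^ (p / q) := by gcongr
            _ ≤ (m * k ^ (p / q)) * V ^ (p / q) := by gcongr
            _ = m * (k * V) ^ (p / q) := by rw [mul_rpow hk0.le hD0.le]; ring
            _ ≤ _ := by gcongr

lemma prof_case {N : ℕ} (hN : 2 ≤ N) (p q r m κ ε L h : ℝ) (hp : 1 < p) (hpq : p < q) (hr : 0 < r)
    (hκ : 0 < κ) (hL : L = lambdaPQ p q (ball (0 : EuclideanSpace ℝ (Fin N)) r)) (hh : 0 ≤ h) (hε : 0 < ε)
    (hm : L * h ^ (1 - p / q) + ε / (κ / volume.real (ball (0 : EuclideanSpace ℝ (Fin N)) r)) ^ (p / q) ≤ m)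
    (w : ℝ → ℝ) (hw : Prof N p q r ε w) (τ : ℝ) (hτ : 0 < τ) (hwτ : 0 < w τ)
    (D : Set (EuclideanSpace ℝ (Fin N))) (hD : IsOpen D) (hDr : D ⊆ ball 0 r)
    (hs : ∀ x ∈ D, ∀ t : ℝ, 0 < t → t ≤ 1 → t • x ∈ D) (hvol : κ < volume.real D)
    (hA : ∫⁻ x in D, ENNReal.ofReal (w ‖x‖ ^ q) ≤ ENNReal.ofReal h) :
    TestFn p q r m D (fun x => w ‖x‖) := by
  have hq : 0 < q := by linarith
  have hβ : 0 < 1 - p / q := by rw [sub_pos, div_lt_one hq]; exact hpq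
  have hL0 : 0 ≤ L := by rw [hL]; exact lam_nonneg _ _ _
  haveI : Nonempty (Fin N) := ⟨⟨0, by omega⟩⟩
  obtain ⟨K, hK⟩ := hw.lip
  set B := volume.real (ball (0 : EuclideanSpace ℝ (Fin N)) r) with hB
  have hB0 : 0 < B := ENNReal.toReal_pos (measure_ball_pos _ _ hr).ne' measure_ball_lt_top.ne
  have hA2 : ∫⁻ x in D, ENNReal.ofReal (w ‖x‖ ^ q) ≠ ∞ := ne_top_of_le_ne_top ENNReal.ofReal_ne_top hA
  have hb := prof_beta (by omega) p q r ε w hq hw D hD hDr hs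
  have ha := prof_alpha (by omega) p q r ε w hq hw D hD hDr hs
  set A := (∫⁻ x in D, ENNReal.ofReal (w ‖x‖ ^ q)).toReal with hAd
  have hAe : ∫⁻ x in D, ENNReal.ofReal (w ‖x‖ ^ q) = ENNReal.ofReal A := (ENNReal.ofReal_toReal hA2).symm
  have hA0 : 0 ≤ A := ENNReal.toReal_nonneg
  have hAk : κ / B ≤ A := by
    rw [hAe] at hb
    have := ENNReal.toReal_mono (ENNReal.mul_ne_top measure_ball_lt_top.ne ENNReal.ofReal_ne_top) hb
    rw [ENNReal.toReal_mul, ENNReal.toReal_ofReal hA0] at this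
    change volume.real D ≤ B * A at this
    rw [div_le_iff₀ hB0]; linarith
  have hApos : 0 < A := lt_of_lt_of_le (by positivity) hAk
  have hAh : A ≤ h := by
    rw [hAe, ENNReal.ofReal_le_ofReal_iff hh] at hA; exact hA
  refine ⟨⟨K * 1, hK.comp lipschitzWith_one_norm⟩, fun x => hw.nonneg _,
    ⟨τ, hτ, fun x hx => hwτ.trans_le (hw.anti hx.le)⟩, ?_, A, hApos, hAe, ?_⟩
  · obtain ⟨r1, h1, h2, h3⟩ := hw.supp
    exact ⟨r1, h1, h2, fun x hx => h3 _ hx⟩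
  · have : ∫⁻ x in D, ENNReal.ofReal (‖fderiv ℝ (fun x : EuclideanSpace ℝ (Fin N) => w ‖x‖) x‖ ^ p) =
        ∫⁻ x in D, ENNReal.ofReal (|deriv w ‖x‖| ^ p) := by
      refine lintegral_congr_ae (ae_restrict_of_ae ?_)
      have h0 : ∀ᵐ x : EuclideanSpace ℝ (Fin N), x ≠ 0 := by
        simp [ae_iff, measure_singleton]
      filter_upwards [h0] with x hx
      rw [radial_fderiv w x hx]
    rw [this]
    refine ha.trans ?_
    rw [hAe, ← hL, ← ENNReal.ofReal_mul hL0, ← ENNReal.ofReal_add (by positivity) hε.le]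
    apply ENNReal.ofReal_le_ofReal
    have hsplit : A = A ^ (1 - p / q) * A ^ (p / q) := by
      rw [← rpow_add hApos]; simp
    have h1 : L * A ≤ L * h ^ (1 - p / q) * A ^ (p / q) := by
      calc L * A = L * (A ^ (1 - p / q) * A ^ (p / q)) := by rw [← hsplit]
        _ ≤ L * (h ^ (1 - p / q) * A ^ (p / q)) := by gcongr
        _ = _ := by ring
    have h2 : ε ≤ ε / (κ / B) ^ (p / q) * A ^ (p / q) := by
      calc ε = ε / (κ / B) ^ (p / q) * (κ / B) ^ (p / q) := by field_simp
        _ ≤ _ := by gcongr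
    calc _ ≤ (L * h ^ (1 - p / q) + ε / (κ / B) ^ (p / q)) * A ^ (p / q) := by linarith
      _ ≤ _ := by gcongr

lemma endpoint {N : ℕ} (hN : 2 ≤ N) (p q r : ℝ) (hp : 1 < p) (hpq : p < q) (hr : 0 < r)
    (hc : ltCritical N p q) :
    ∃ m : ℝ, 0 < m ∧ 2 ^ (1 - p / q) * m < lambdaPQ p q (ball (0 : EuclideanSpace ℝ (Fin N)) r) ∧
    ∀ (D : Set (EuclideanSpace ℝ (Fin N))) (e : EuclideanSpace ℝ (Fin N)), IsOpen D → D.Nonempty →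
      D ⊆ ball 0 r → (∀ x ∈ D, ∀ t : ℝ, 0 < t → t ≤ 1 → t • x ∈ D) → ‖e‖ = 2 * r →
      (∀ y ∈ D, ‖y‖ ^ 2 ≤ 2 * inner ℝ y e) → ∃ f, TestFn p q r m D f := by
  have hq : 0 < q := by linarith
  have hβ : 0 < 1 - p / q := by rw [sub_pos, div_lt_one hq]; exact hpq
  obtain ⟨τ, c1, hτ, hτr, hc1, hw⟩ := nonconc hN p q r hp hpq hr hc
  obtain ⟨δ, hδ, hhalf⟩ := half_est hN p q r τ c1 hq hτ hτr hc1
  have hL0 : 0 < lambdaPQ p q (ball (0 : EuclideanSpace ℝ (Fin N)) r) := lam_pos hN p q r hp (by linarith) hc hr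
  set L := lambdaPQ p q (ball (0 : EuclideanSpace ℝ (Fin N)) r) with hL
  set h := max (1/2 - δ) 0 with hh
  have hh0 : 0 ≤ h := le_max_right _ _
  have hh2 : h < 1/2 := max_lt (by linarith) (by norm_num)
  have hlt : L * h ^ (1 - p / q) < L / 2 ^ (1 - p / q) := by
    rw [div_eq_mul_inv L, ← inv_rpow (by norm_num)]
    have : h ^ (1 - p / q) < (2⁻¹ : ℝ) ^ (1 - p / q) := rpow_lt_rpow hh0 (by linarith) hβ
    gcongr
  obtain ⟨m, hm1, hm2⟩ := exists_between hlt
  have hm0 : 0 < m := lt_of_le_of_lt (by positivity) hm1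
  refine ⟨m, hm0, ?_, ?_⟩
  · rw [lt_div_iff₀ (by positivity)] at hm2; linarith
  set k := ((r / 4) ^ q * (1/4)^N : ℝ) with hk
  have hk0 : 0 < k := by positivity
  set κ := (m * k ^ (p / q)) ^ (1 - p / q)⁻¹ with hκ
  have hκ0 : 0 < κ := by positivity
  have hκe : κ ^ (1 - p / q) ≤ m * k ^ (p / q) := by
    rw [hκ, rpow_inv_rpow (by positivity) hβ.ne']
  have hB0 : 0 < volume.real (ball (0 : EuclideanSpace ℝ (Fin N)) r) :=
    ENNReal.toReal_pos (measure_ball_pos _ _ hr).ne' measure_ball_lt_top.ne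
  set a0 := (κ / volume.real (ball (0 : EuclideanSpace ℝ (Fin N)) r)) ^ (p / q) with ha0
  have ha0' : 0 < a0 := by positivity
  set ε := min 1 ((m - L * h ^ (1 - p / q)) * a0) with hε
  have hε0 : 0 < ε := lt_min one_pos (mul_pos (by linarith) ha0')
  obtain ⟨w, hwP, hwτ⟩ := hw ε hε0 (min_le_left _ _)
  intro D e hD hDne hDr hs he hin
  rcases le_or_gt (volume.real D) κ with hv | hv
  · exact ⟨_, cone_case p q r m κ hp hpq hr hκ0 hκe D hD hDne hDr hs hv⟩
  · refine ⟨_, prof_case hN p q r m κ ε L h hp hpq hr hκ0 hL hh0 hε0 ?_ w hwP τ hτ (by linarith) D hD hDr hs hv ?_⟩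
    · rw [← ha0]
      have : ε / a0 ≤ m - L * h ^ (1 - p / q) := by
        rw [div_le_iff₀ ha0']; exact min_le_right _ _
      linarith
    · refine (hhalf ε w hwP hwτ D e he hin).trans (ENNReal.ofReal_le_ofReal (le_max_left _ _))

lemma shift_int {N : ℕ} (Ω : Set (EuclideanSpace ℝ (Fin N))) (hΩ : IsOpen Ω) (x0 : EuclideanSpace ℝ (Fin N)) (r : ℝ)
    (h : EuclideanSpace ℝ (Fin N) → ℝ≥0∞) (hz : ∀ y, r ≤ ‖y‖ → h y = 0) :
    ∫⁻ x in Ω, h (x - x0) = ∫⁻ y in {y | x0 + y ∈ Ω} ∩ ball 0 r, h y := by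
  have hD : IsOpen ({y | x0 + y ∈ Ω} ∩ ball (0 : EuclideanSpace ℝ (Fin N)) r) :=
    (hΩ.preimage (f := fun y => x0 + y) (by fun_prop)).inter isOpen_ball
  rw [← lintegral_indicator hΩ.measurableSet, ← lintegral_indicator hD.measurableSet,
    ← lintegral_sub_right_eq_self (({y | x0 + y ∈ Ω} ∩ ball (0 : EuclideanSpace ℝ (Fin N)) r).indicator h) x0]
  refine lintegral_congr fun x => ?_
  by_cases hx : x ∈ Ω
  · rw [indicator_of_mem hx]
    by_cases hb : ‖x - x0‖ < r
    · rw [indicator_of_mem]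
      exact ⟨by simpa using hx, by simpa using hb⟩
    · rw [hz _ (not_lt.1 hb), eq_comm, indicator_apply_eq_zero]
      intro _; exact hz _ (not_lt.1 hb)
  · rw [indicator_of_notMem hx, indicator_of_notMem]
    intro hh
    apply hx
    simpa using hh.1

lemma pow_mean (X Y θ : ℝ) (hX : 0 ≤ X) (hY : 0 ≤ Y) (h0 : 0 ≤ θ) (h1 : θ ≤ 1) :
    X ^ θ + Y ^ θ ≤ 2 ^ (1 - θ) * (X + Y) ^ θ := by
  have h := (Real.concaveOn_rpow h0 h1).2 (mem_Ici.2 hX) (mem_Ici.2 hY) (show (0:ℝ) ≤ 1/2 by norm_num)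
    (show (0:ℝ) ≤ 1/2 by norm_num) (by norm_num)
  simp only [smul_eq_mul] at h
  rw [← mul_add, ← mul_add, mul_rpow (by norm_num) (by positivity)] at h
  have e : (2:ℝ) ^ (1 - θ) = 2 * (1/2) ^ θ := by
    rw [rpow_sub (by norm_num), rpow_one, one_div, inv_rpow (by norm_num)]; rfl
  rw [e]; linarith

lemma glue {N : ℕ} (p q m : ℝ) (hp : 1 < p) (hpq : p < q) (hm : 0 < m)
    (Ω : Set (EuclideanSpace ℝ (Fin N))) (hΩ : IsOpen Ω) (hb : Bornology.IsBounded Ω)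
    (g0 g1 : EuclideanSpace ℝ (Fin N) → ℝ) (hl0 : ∃ K, LipschitzWith K g0) (hl1 : ∃ K, LipschitzWith K g1)
    (hn0 : ∀ x, 0 ≤ g0 x) (hn1 : ∀ x, 0 ≤ g1 x) (hx0 : ∃ x ∈ Ω, 0 < g0 x) (hx1 : ∃ x ∈ Ω, 0 < g1 x)
    (hdis : ∀ x, g0 =ᶠ[nhds x] 0 ∨ g1 =ᶠ[nhds x] 0)
    (he0 : ∃ A : ℝ, 0 < A ∧ ∫⁻ x in Ω, ENNReal.ofReal (g0 x ^ q) = ENNReal.ofReal A ∧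
      ∫⁻ x in Ω, ENNReal.ofReal (‖fderiv ℝ g0 x‖ ^ p) ≤ ENNReal.ofReal (m * A ^ (p / q)))
    (he1 : ∃ A : ℝ, 0 < A ∧ ∫⁻ x in Ω, ENNReal.ofReal (g1 x ^ q) = ENNReal.ofReal A ∧
      ∫⁻ x in Ω, ENNReal.ofReal (‖fderiv ℝ g1 x‖ ^ p) ≤ ENNReal.ofReal (m * A ^ (p / q))) :
    muPQ p q Ω ≤ 2 ^ (1 - p / q) * m := by
  have hq : 0 < q := by linarith
  have hq1 : 0 < q - 1 := by linarith
  have hθ0 : 0 < p / q := by positivity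
  have hθ1 : p / q ≤ 1 := by rw [div_le_one hq]; exact hpq.le
  -- generic facts
  have hcont : ∀ g : EuclideanSpace ℝ (Fin N) → ℝ, (∃ K, LipschitzWith K g) → ∀ s : ℝ, 0 ≤ s →
      IntegrableOn (fun x => g x ^ s) Ω := by
    rintro g ⟨K, hK⟩ s hs
    have : Continuous fun x => g x ^ s := hK.continuous.rpow_const fun x => Or.inr hs
    exact (this.continuousOn.integrableOn_compact hb.isCompact_closure).mono_set subset_closure
  have hI : ∀ g : EuclideanSpace ℝ (Fin N) → ℝ, (∃ K, LipschitzWith K g) → (∀ x, 0 ≤ g x) →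
      (∃ x ∈ Ω, 0 < g x) → 0 < ∫ x in Ω, g x ^ (q - 1) := by
    rintro g ⟨K, hK⟩ hn ⟨x, hx, hgx⟩
    rw [setIntegral_pos_iff_support_of_nonneg_ae (Filter.Eventually.of_forall fun x => rpow_nonneg (hn x) _)
      (hcont g ⟨K, hK⟩ _ hq1.le)]
    refine lt_of_lt_of_le ((((isOpen_lt continuous_const hK.continuous).inter hΩ).measure_pos volume
      ⟨x, hgx, hx⟩)) (measure_mono ?_)
    rintro y ⟨hy, hyΩ⟩
    exact ⟨(rpow_pos_of_pos hy _).ne', hyΩ⟩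
  have hGI : ∀ g : EuclideanSpace ℝ (Fin N) → ℝ, (∃ K, LipschitzWith K g) → (∀ x, 0 ≤ g x) →
      (∃ A : ℝ, 0 < A ∧ ∫⁻ x in Ω, ENNReal.ofReal (g x ^ q) = ENNReal.ofReal A ∧
      ∫⁻ x in Ω, ENNReal.ofReal (‖fderiv ℝ g x‖ ^ p) ≤ ENNReal.ofReal (m * A ^ (p / q))) →
      ∃ A : ℝ, 0 < A ∧ ∫ x in Ω, g x ^ q = A ∧ IntegrableOn (fun x => ‖fderiv ℝ g x‖ ^ p) Ω ∧
        ∫ x in Ω, ‖fderiv ℝ g x‖ ^ p ≤ m * A ^ (p / q) := by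
    rintro g ⟨K, hK⟩ hn ⟨A, hA, h1, h2⟩
    have hmeas : Measurable fun x => ‖fderiv ℝ g x‖ ^ p := by
      have := measurable_fderiv ℝ g
      fun_prop
    have hnn : ∀ x, 0 ≤ ‖fderiv ℝ g x‖ ^ p := fun x => by positivity
    refine ⟨A, hA, ?_, ?_, ?_⟩
    · rw [integral_eq_lintegral_of_nonneg_ae (Filter.Eventually.of_forall fun x => rpow_nonneg (hn x) _)
        (hcont g ⟨K, hK⟩ _ hq.le).1, h1, ENNReal.toReal_ofReal hA.le]
    · exact (lintegral_ofReal_ne_top_iff_integrable hmeas.aestronglyMeasurable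
        (Filter.Eventually.of_forall hnn)).1 (ne_top_of_le_ne_top ENNReal.ofReal_ne_top h2)
    · rw [integral_eq_lintegral_of_nonneg_ae (Filter.Eventually.of_forall hnn) hmeas.aestronglyMeasurable]
      exact ENNReal.toReal_le_of_le_ofReal (by positivity) h2
  obtain ⟨A0, hA0, hgA0, hG0, hGm0⟩ := hGI g0 hl0 hn0 he0
  obtain ⟨A1, hA1, hgA1, hG1, hGm1⟩ := hGI g1 hl1 hn1 he1
  have hI0 := hI g0 hl0 hn0 hx0
  have hI1 := hI g1 hl1 hn1 hx1
  set I0 := ∫ x in Ω, g0 x ^ (q - 1) with hI0d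
  set I1 := ∫ x in Ω, g1 x ^ (q - 1) with hI1d
  set c0 := I1 ^ (q - 1)⁻¹ with hc0d
  set c1 := I0 ^ (q - 1)⁻¹ with hc1d
  have hc0 : 0 < c0 := by positivity
  have hc1 : 0 < c1 := by positivity
  have hc0p : c0 ^ (q - 1) = I1 := rpow_inv_rpow hI1.le hq1.ne'
  have hc1p : c1 ^ (q - 1) = I0 := rpow_inv_rpow hI0.le hq1.ne'
  set φ : EuclideanSpace ℝ (Fin N) → ℝ := fun x => c0 * g0 x - c1 * g1 x with hφ
  have hz : ∀ x, g0 x = 0 ∨ g1 x = 0 := fun x => (hdis x).imp (fun h => h.eq_of_nhds) (fun h => h.eq_of_nhds)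
  have e1 : ∀ x, |φ x| ^ q = c0 ^ q * g0 x ^ q + c1 ^ q * g1 x ^ q := by
    intro x
    rcases hz x with h | h
    · simp only [hφ, h]
      rw [mul_zero, zero_sub, abs_neg, abs_of_nonneg (mul_nonneg hc1.le (hn1 x)), mul_rpow hc1.le (hn1 x),
        zero_rpow hq.ne']; ring
    · simp only [hφ, h]
      rw [mul_zero, sub_zero, abs_of_nonneg (mul_nonneg hc0.le (hn0 x)), mul_rpow hc0.le (hn0 x),
        zero_rpow hq.ne']; ring
  have pw : ∀ t : ℝ, 0 ≤ t → t ^ (q - 2) * t = t ^ (q - 1) := by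
    intro t ht
    rcases ht.eq_or_lt with h | h
    · rw [← h, mul_zero, zero_rpow hq1.ne']
    · nth_rewrite 2 [← rpow_one t]
      rw [← rpow_add h]; congr 1; ring
  have e2 : ∀ x, |φ x| ^ (q - 2) * φ x = c0 ^ (q - 1) * g0 x ^ (q - 1) - c1 ^ (q - 1) * g1 x ^ (q - 1) := by
    intro x
    rcases hz x with h | h
    · have ht := mul_nonneg hc1.le (hn1 x)
      simp only [hφ, h]
      rw [mul_zero, zero_sub, abs_neg, abs_of_nonneg ht, zero_rpow hq1.ne', ← mul_rpow hc1.le (hn1 x), ← pw _ ht]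
      ring
    · have ht := mul_nonneg hc0.le (hn0 x)
      simp only [hφ, h]
      rw [mul_zero, sub_zero, abs_of_nonneg ht, zero_rpow hq1.ne', ← mul_rpow hc0.le (hn0 x), ← pw _ ht]
      ring
  have hp0 : p ≠ 0 := by linarith
  have e3 : ∀ x, ‖fderiv ℝ φ x‖ ^ p = c0 ^ p * ‖fderiv ℝ g0 x‖ ^ p + c1 ^ p * ‖fderiv ℝ g1 x‖ ^ p := by
    intro x
    rcases hdis x with h | h
    · have h1 : φ =ᶠ[nhds x] ((-c1) • g1) := by
        filter_upwards [h] with y hy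
        simp [hφ, hy]
      have h2 : fderiv ℝ g0 x = 0 := by rw [h.fderiv_eq]; simp
      rw [h1.fderiv_eq, fderiv_const_smul_field, h2]
      simp only [Pi.smul_apply, norm_smul, norm_zero, norm_neg]
      rw [zero_rpow hp0, norm_of_nonneg hc1.le, mul_rpow hc1.le (norm_nonneg _)]; ring
    · have h1 : φ =ᶠ[nhds x] (c0 • g0) := by
        filter_upwards [h] with y hy
        simp [hφ, hy]
      have h2 : fderiv ℝ g1 x = 0 := by rw [h.fderiv_eq]; simp
      rw [h1.fderiv_eq, fderiv_const_smul_field, h2]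
      simp only [Pi.smul_apply, norm_smul, norm_zero]
      rw [zero_rpow hp0, norm_of_nonneg hc0.le, mul_rpow hc0.le (norm_nonneg _)]; ring
  have hquot : rayleighQuot p q Ω φ ≤ 2 ^ (1 - p / q) * m := by
    unfold rayleighQuot
    simp only [e1, e3]
    rw [integral_add (hG0.const_mul _) (hG1.const_mul _),
      integral_add ((hcont g0 hl0 q hq.le).const_mul _) ((hcont g1 hl1 q hq.le).const_mul _)]
    simp only [integral_const_mul]
    rw [hgA0, hgA1, div_le_iff₀ (by positivity)]
    have hpm := pow_mean (c0 ^ q * A0) (c1 ^ q * A1) (p / q) (by positivity) (by positivity) hθ0.le hθ1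
    have hcc : ∀ c A : ℝ, 0 < c → 0 < A → (c ^ q * A) ^ (p / q) = c ^ p * A ^ (p / q) := by
      intro c A hc hA
      rw [mul_rpow (by positivity) hA.le, ← rpow_mul hc.le]
      congr 2; field_simp
    rw [hcc _ _ hc0 hA0, hcc _ _ hc1 hA1] at hpm
    calc _ ≤ c0 ^ p * (m * A0 ^ (p / q)) + c1 ^ p * (m * A1 ^ (p / q)) := by gcongr
      _ = m * (c0 ^ p * A0 ^ (p / q) + c1 ^ p * A1 ^ (p / q)) := by ring
      _ ≤ m * (2 ^ (1 - p / q) * (c0 ^ q * A0 + c1 ^ q * A1) ^ (p / q)) := by gcongr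
      _ = _ := by ring
  refine le_trans (csInf_le ⟨0, ?_⟩ ?_) hquot
  · rintro _ ⟨v, K, _, _, _, rfl⟩
    unfold rayleighQuot
    refine div_nonneg (integral_nonneg fun x => ?_) (rpow_nonneg (integral_nonneg fun x => ?_) _)
    · simp only [Pi.zero_apply]; positivity
    · simp only [Pi.zero_apply]; positivity
  · obtain ⟨K0, hK0⟩ := hl0
    obtain ⟨K1, hK1⟩ := hl1
    have hL0 : LipschitzWith (‖c0‖₊ * K0) fun x => c0 * g0 x := (lipschitzWith_smul c0).comp hK0
    have hL1 : LipschitzWith (‖c1‖₊ * K1) fun x => c1 * g1 x := (lipschitzWith_smul c1).comp hK1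
    refine ⟨φ, _, (hL0.sub hL1).lipschitzOnWith, ?_, ?_, rfl⟩
    · obtain ⟨x, hx, hgx⟩ := hx0
      refine ⟨x, hx, ?_⟩
      have h1 : g1 x = 0 := (hz x).resolve_left hgx.ne'
      simp only [hφ, h1, mul_zero, sub_zero]
      positivity
    · simp only [e2]
      rw [integral_sub ((hcont g0 ⟨K0, hK0⟩ _ hq1.le).const_mul _) ((hcont g1 ⟨K1, hK1⟩ _ hq1.le).const_mul _),
        integral_const_mul, integral_const_mul, hc0p, hc1p, ← hI0d, ← hI1d]
      ring

lemma piece {N : ℕ} (p q r m : ℝ) (hp : 0 < p) (hq : 0 < q) (hr : 0 < r)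
    (hE : ∀ (D : Set (EuclideanSpace ℝ (Fin N))) (e : EuclideanSpace ℝ (Fin N)), IsOpen D → D.Nonempty →
      D ⊆ ball 0 r → (∀ x ∈ D, ∀ t : ℝ, 0 < t → t ≤ 1 → t • x ∈ D) → ‖e‖ = 2 * r →
      (∀ y ∈ D, ‖y‖ ^ 2 ≤ 2 * inner ℝ y e) → ∃ f, TestFn p q r m D f)
    (Ω : Set (EuclideanSpace ℝ (Fin N))) (hΩ : IsOpen Ω) (hconv : Convex ℝ Ω)
    (x0 x1 : EuclideanSpace ℝ (Fin N)) (hx0 : x0 ∈ closure Ω) (h01 : ‖x1 - x0‖ = 2 * r)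
    (hd : ∀ x ∈ Ω, dist x x1 ≤ 2 * r) :
    ∃ g : EuclideanSpace ℝ (Fin N) → ℝ, (∃ K, LipschitzWith K g) ∧ (∀ x, 0 ≤ g x) ∧ (∃ x ∈ Ω, 0 < g x) ∧
      (∃ r1, r1 < r ∧ ∀ x, r1 ≤ dist x x0 → g x = 0) ∧
      (∃ A : ℝ, 0 < A ∧ ∫⁻ x in Ω, ENNReal.ofReal (g x ^ q) = ENNReal.ofReal A ∧
      ∫⁻ x in Ω, ENNReal.ofReal (‖fderiv ℝ g x‖ ^ p) ≤ ENNReal.ofReal (m * A ^ (p / q))) := by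
  set D := {y | x0 + y ∈ Ω} ∩ ball (0 : EuclideanSpace ℝ (Fin N)) r with hDd
  have hD : IsOpen D :=
    (hΩ.preimage (f := fun y => x0 + y) (by fun_prop)).inter isOpen_ball
  have hne : D.Nonempty := by
    obtain ⟨x, hx, hxd⟩ := Metric.mem_closure_iff.1 hx0 r hr
    refine ⟨x - x0, by simpa using hx, ?_⟩
    rw [mem_ball_zero_iff, norm_sub_rev, ← dist_eq_norm]; exact hxd
  have hstar : ∀ x ∈ D, ∀ t : ℝ, 0 < t → t ≤ 1 → t • x ∈ D := by
    rintro y ⟨hy, hyb⟩ t ht ht1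
    refine ⟨?_, ?_⟩
    · have := hconv.combo_closure_interior_mem_interior hx0 (hΩ.interior_eq.symm ▸ hy : x0 + y ∈ interior Ω)
        (a := 1 - t) (b := t) (by linarith) ht (by ring)
      rw [hΩ.interior_eq] at this
      have e : x0 + t • y = (1 - t) • x0 + t • (x0 + y) := by module
      show x0 + t • y ∈ Ω
      rw [e]; exact this
    · rw [mem_ball_zero_iff] at hyb ⊢
      rw [norm_smul, norm_of_nonneg ht.le]
      nlinarith [norm_nonneg y]
  have hin : ∀ y ∈ D, ‖y‖ ^ 2 ≤ 2 * inner ℝ y (x1 - x0) := by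
    rintro y ⟨hy, _⟩
    have h1 := hd _ hy
    rw [dist_eq_norm, show x0 + y - x1 = y - (x1 - x0) by abel, ← h01] at h1
    have h2 := norm_sub_sq_real y (x1 - x0)
    nlinarith [norm_nonneg (y - (x1 - x0))]
  obtain ⟨f, hf⟩ := hE D (x1 - x0) hD hne inter_subset_right hstar h01 hin
  obtain ⟨K, hK⟩ := hf.lip
  obtain ⟨s, hs, hfs⟩ := hf.pos
  obtain ⟨r1, hr1, hr1r, hfz⟩ := hf.supp
  have hfd : ∀ y, r ≤ ‖y‖ → fderiv ℝ f y = 0 := by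
    intro y hy
    have : f =ᶠ[nhds y] fun _ => 0 := by
      filter_upwards [(isOpen_lt continuous_const continuous_norm).mem_nhds (show r1 < ‖y‖ by linarith)] with z hz
      exact hfz z (le_of_lt hz)
    rw [this.fderiv_eq]; simp
  refine ⟨fun x => f (x - x0), ⟨K, ?_⟩, fun x => hf.nonneg _, ?_, ⟨r1, hr1r, fun x hx => hfz _ (by rwa [← dist_eq_norm])⟩, ?_⟩
  · refine LipschitzWith.of_dist_le_mul fun x y => ?_
    have := hK.dist_le_mul (x - x0) (y - x0)
    simpa using this
  · obtain ⟨x, hx, hxd⟩ := Metric.mem_closure_iff.1 hx0 s hs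
    refine ⟨x, hx, hfs _ ?_⟩
    rw [norm_sub_rev, ← dist_eq_norm]; exact hxd
  · obtain ⟨A, hA, h1, h2⟩ := hf.est
    refine ⟨A, hA, ?_, ?_⟩
    · rw [← h1]
      refine shift_int Ω hΩ x0 r (fun y => ENNReal.ofReal (f y ^ q)) fun y hy => ?_
      rw [hfz y (by linarith), zero_rpow hq.ne', ENNReal.ofReal_zero]
    · refine le_trans (le_of_eq ?_) h2
      have : ∀ x, fderiv ℝ (fun x => f (x - x0)) x = fderiv ℝ f (x - x0) := fun x => fderiv_comp_sub x0
      simp only [this]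
      refine shift_int Ω hΩ x0 r (fun y => ENNReal.ofReal (‖fderiv ℝ f y‖ ^ p)) fun y hy => ?_
      rw [hfd y hy, norm_zero, zero_rpow hp.ne', ENNReal.ofReal_zero]

lemma far_points {N : ℕ} (Ω : Set (EuclideanSpace ℝ (Fin N))) (hb : Bornology.IsBounded Ω) (hne : Ω.Nonempty) :
    ∃ x0 ∈ closure Ω, ∃ x1 ∈ closure Ω, dist x0 x1 = diam Ω := by
  have hc := hb.isCompact_closure
  obtain ⟨z, hz, hmax⟩ := (hc.prod hc).exists_isMaxOn (hne.closure.prod hne.closure)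
    (f := fun z : EuclideanSpace ℝ (Fin N) × EuclideanSpace ℝ (Fin N) => dist z.1 z.2) (by fun_prop)
  refine ⟨z.1, hz.1, z.2, hz.2, le_antisymm ?_ ?_⟩
  · rw [← Metric.diam_closure]
    exact dist_le_diam_of_mem hc.isBounded hz.1 hz.2
  · refine diam_le_of_forall_dist_le dist_nonneg fun x hx y hy => ?_
    have := isMaxOn_iff.1 hmax (x, y) (Set.mk_mem_prod (subset_closure hx) (subset_closure hy))
    exact this

theorem main_aux {N : ℕ} (hN : 2 ≤ N) (p q : ℝ) (hp : 1 < p)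
    (hpq : p < q) (hq : ltCritical N p q)
    (c : EuclideanSpace ℝ (Fin N)) (r : ℝ) (hr : 0 < r) :
    ∃ m : ℝ, m < lambdaPQ p q (ball c r) ∧
      ∀ Ω : Set (EuclideanSpace ℝ (Fin N)), IsOpen Ω → Bornology.IsBounded Ω →
        Convex ℝ Ω → Ω.Nonempty → diam Ω = diam (ball c r) →
        muPQ p q Ω ≤ m := by
  haveI : Nonempty (Fin N) := ⟨⟨0, by omega⟩⟩
  obtain ⟨m, hm, hml, hE⟩ := endpoint hN p q r hp hpq hr hq
  refine ⟨2 ^ (1 - p / q) * m, hml.trans_le (lam_trans p q r hr hp (by linarith) c), ?_⟩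
  intro Ω hΩ hb hconv hne hdiam
  rw [Metric.diam_ball_eq c hr.le] at hdiam
  obtain ⟨x0, hx0, x1, hx1, hd⟩ := far_points Ω hb hne
  rw [hdiam] at hd
  have hall : ∀ z ∈ closure Ω, ∀ x ∈ Ω, dist x z ≤ 2 * r := by
    intro z hz x hx
    rw [← hdiam, ← Metric.diam_closure]
    exact dist_le_diam_of_mem hb.closure (subset_closure hx) hz
  obtain ⟨g0, hl0, hn0, hp0, ⟨ra, hra, hz0⟩, he0⟩ := piece p q r m (by linarith) (by linarith) hr hE Ω hΩ hconv x0 x1 hx0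
    (by rw [← dist_eq_norm, dist_comm]; exact hd) (hall x1 hx1)
  obtain ⟨g1, hl1, hn1, hp1, ⟨rb, hrb, hz1⟩, he1⟩ := piece p q r m (by linarith) (by linarith) hr hE Ω hΩ hconv x1 x0 hx1
    (by rw [← dist_eq_norm]; exact hd) (hall x0 hx0)
  refine glue p q m hp hpq hm Ω hΩ hb g0 g1 hl0 hl1 hn0 hn1 hp0 hp1 ?_ he0 he1
  intro x
  rcases le_or_gt r (dist x x0) with h | h
  · left
    filter_upwards [(isOpen_lt continuous_const (continuous_id.dist continuous_const)).mem_nhds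
      (show ra < dist x x0 by linarith)] with y hy
    exact hz0 y (le_of_lt hy)
  · right
    have : rb < dist x x1 := by
      have := dist_triangle x0 x x1
      rw [dist_comm x0 x] at this
      linarith
    filter_upwards [(isOpen_lt continuous_const (continuous_id.dist continuous_const)).mem_nhds this] with y hy
    exact hz1 y (le_of_lt hy)

end Aux

/-- Remark 4.3. Let `1 < p < q < p*`. For every open ball `B ⊂ ℝ^N`,
the supremum of `μ_{p,q}(Ω)` over open bounded convex sets `Ω` with `diam Ω = diam B`
is strictly below `λ_{p,q}(B)`: there is `m < λ_{p,q}(B)` bounding all such `μ_{p,q}(Ω)`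
from above, so no maximizing sequence can reach `λ_{p,q}(B)` and the bound of
Theorem 4.1 is not sharp. -/
theorem muPQ_sup_lt_lambdaPQ_ball {N : ℕ} (hN : 2 ≤ N) (p q : ℝ) (hp : 1 < p)
    (hpq : p < q) (hq : ltCritical N p q)
    (c : EuclideanSpace ℝ (Fin N)) (r : ℝ) (hr : 0 < r) :
    ∃ m : ℝ, m < lambdaPQ p q (ball c r) ∧
      ∀ Ω : Set (EuclideanSpace ℝ (Fin N)), IsOpen Ω → Bornology.IsBounded Ω →
        Convex ℝ Ω → Ω.Nonempty → diam Ω = diam (ball c r) →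
        muPQ p q Ω ≤ m := by
  exact main_aux hN p q hp hpq hq c r hr
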